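/- Let p > 3 be a prime with p ≡ 3 (mod 4) and let K = ℚ(√-p). Then the counting function a_K(n) (the number of quadratic extensions L/K inside a fixed algebraic closure with absolute discriminant at most n) satisfies a_K(n) = C·n + o(n) as n → ∞, where C = (π · h_K)/(2 · p^{5/2} · ζ_K(2)) · ∏_{𝔭 | 2} g_𝔭(1)/(1 + N(𝔭)^{-1}); here the product is over the prime ideals 𝔭 of 𝓞_K above 2, and g_𝔭(s) = 1 + N(𝔭)^{-2s} + 2·N(𝔭)^{-3s} if N(𝔭) = 2 (i.e. 2 splits in K), while g_𝔭(s) = 1 + 3·N(𝔭)^{-2s} + 4·N(𝔭)^{-3s} if N(𝔭) = 4 (i.e. 2 is inert in K). Equivalently, a_K(n)/n tends to C. -/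

import Mathlib

open NumberField Filter

/-- The value of the Dedekind zeta function of `K` at `2`, defined as the series
`∑ N(I)^{-2}` over nonzero ideals `I` of the ring of integers of `K`. -/
noncomputable def dedekindZetaTwo (K : Type*) [Field K] [NumberField K] : ℝ :=
  ∑' I : {I : Ideal (𝓞 K) // I ≠ ⊥}, ((Ideal.absNorm I.1 : ℝ)) ^ (-2 : ℤ)

/-- The local factor `g_𝔭(s)` at a prime `𝔭` above 2 with norm `q`:
`1 + q^{-2s} + 2 q^{-3s}` if `q = 2` (split case), and
`1 + 3 q^{-2s} + 4 q^{-3s}` otherwise (inert case, `q = 4`). -/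
noncomputable def gFactor (q : ℕ) (s : ℝ) : ℝ :=
  if q = 2 then 1 + (q : ℝ) ^ (-(2 * s)) + 2 * (q : ℝ) ^ (-(3 * s))
  else 1 + 3 * (q : ℝ) ^ (-(2 * s)) + 4 * (q : ℝ) ^ (-(3 * s))

/-- `quadCount K n` is the number of quadratic extensions `L` of `K` inside a fixed
algebraic closure of `K` with absolute discriminant at most `n`. -/
noncomputable def quadCount (K : Type*) [Field K] [NumberField K] (n : ℕ) : ℕ :=
  Nat.card {L : IntermediateField K (AlgebraicClosure K) //
    Module.finrank K L = 2 ∧ ∃ h : NumberField L, |@NumberField.discr L _ h| ≤ (n : ℤ)}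

/-!
Fix a quadratic extension `L = K(√δ)` and a nonzero ideal `f` of `𝓞 K`. The different of `L/K` is
`√δ · I` for a fractional ideal `I` of `K`. Choose the integral ideal `q`, among fixed
representatives of the ideal classes, for which `f I q = (g)` is principal, and put `D = δ g²`.
Then `D` is a nonsquare of `K` that is a square modulo `4q²`, it is unique up to squares of units,
and `|disc L| · N(f)² = |disc K|² · |N(D)| / N(q)²`. Conversely every such `D` arises from exactly
one pair `(L, f)`, the ideal `f` recording how far `𝓞 K[√D]` is from being maximal.

When `K` is imaginary quadratic, the squares modulo `4q²` form the union of `#(q/2q) = 4` cosets of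
the lattice `4q²` and the perfect squares among them are negligible, so counting lattice points in
discs gives the number of pairs `(L, f)` with `|disc L| · N(f)² ≤ Y` up to `o(Y)`. Möbius inversion
over `f` then divides the density by `ζ_K(2)`. For `K = ℚ(√-p)` the units are `±1`, the discriminant
is `-p`, and the factors at the primes above `2` are all equal to `1`.
-/

open Topology nonZeroDivisors

/-! ### Möbius inversion in unique factorization monoids -/

section Moebius

open UniqueFactorizationMonoid

variable {α : Type*} [CommMonoidWithZero α] [UniqueFactorizationMonoid α]

theorem abs_moebius_le_one (a : α) : |moebius a| ≤ 1 := by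
  unfold moebius
  split_ifs <;> simp

theorem moebius_irreducible_mul {p d : α} (hp : Irreducible p) (hd : ¬p ∣ d) :
    moebius (p * d) = -moebius d := by
  rw [((hp.isRelPrime_iff_not_dvd).2 hd).moebius_mul, hp.moebius_eq, neg_one_mul]

theorem not_dvd_of_moebius_mul_ne_zero {p d : α} (hp : Irreducible p)
    (h : moebius (p * d) ≠ 0) : ¬p ∣ d := by
  rintro ⟨e, rfl⟩
  have hsq : Squarefree (p * (p * e)) := not_not.1 (mt moebius_of_not_squarefree h)
  exact hp.not_isUnit (hsq p ⟨e, (mul_assoc p p e).symm⟩)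

open scoped Classical in
theorem sum_moebius_filter_dvd {p a : α} (hp : Irreducible p) (hpa : p ∣ a)
    {s : Finset α} (hs : ∀ d, d ∈ s ↔ d ∣ a) :
    ∑ d ∈ s with p ∣ d, moebius d = -∑ d ∈ s with ¬p ∣ d, moebius d := by
  rw [← Finset.sum_neg_distrib]
  symm
  refine Finset.sum_bij_ne_zero (fun d _ _ ↦ p * d) ?_ ?_ ?_ ?_
  · intro d hd _
    rw [Finset.mem_filter, hs] at hd ⊢
    exact ⟨((hp.isRelPrime_iff_not_dvd).2 hd.2).mul_dvd hpa hd.1, dvd_mul_right p d⟩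
  · exact fun _ _ _ _ _ _ h ↦ mul_left_cancel₀ hp.ne_zero h
  · intro d hd hμ
    rw [Finset.mem_filter, hs] at hd
    obtain ⟨hda, e, rfl⟩ := hd
    have hpe : ¬p ∣ e := not_dvd_of_moebius_mul_ne_zero hp hμ
    refine ⟨e, Finset.mem_filter.2 ⟨(hs e).2 ((dvd_mul_left e p).trans hda), hpe⟩, ?_, rfl⟩
    rwa [moebius_irreducible_mul hp hpe] at hμ
  · exact fun d hd _ ↦ (moebius_irreducible_mul hp (Finset.mem_filter.1 hd).2).symm

open scoped Classical in
theorem sum_moebius_of_mem_iff_dvd [Subsingleton αˣ] {a : α} (ha : a ≠ 0)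
    {s : Finset α} (hs : ∀ d, d ∈ s ↔ d ∣ a) :
    ∑ d ∈ s, moebius d = if a = 1 then 1 else 0 := by
  split_ifs with h1
  · have hs1 : s = {1} := by
      ext d
      rw [hs, h1, Finset.mem_singleton, ← isUnit_iff_dvd_one, isUnit_iff_eq_one]
    rw [hs1, Finset.sum_singleton, moebius_one]
  · obtain ⟨p, hp, hpa⟩ := WfDvdMonoid.exists_irreducible_factor (mt isUnit_iff_eq_one.1 h1) ha
    rw [← Finset.sum_filter_add_sum_filter_not s (p ∣ ·), sum_moebius_filter_dvd hp hpa hs,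
      neg_add_cancel]

variable [Nontrivial α]

/-- Factorizations `m = f * g` with nonzero factors, indexed by their first factor. -/
noncomputable def factorizationEquivDivisor (m : α⁰) :
    {x : α⁰ × α⁰ // x.1 * x.2 = m} ≃ {d : α // d ∣ m} :=
  Equiv.ofBijective (fun x ↦ ⟨x.1.1, x.1.2, congrArg Subtype.val x.2.symm⟩) <| by
    constructor
    · rintro ⟨⟨f, g⟩, hfg⟩ ⟨⟨f', g'⟩, hfg'⟩ h
      obtain rfl : f = f' := Subtype.ext (Subtype.mk.inj h)
      obtain rfl : g = g' := Subtype.ext <| mul_left_cancel₀ (nonZeroDivisors.coe_ne_zero f) <|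
        congrArg Subtype.val (hfg.trans hfg'.symm)
      rfl
    · rintro ⟨d, e, hde⟩
      have hmem : d * e ∈ α⁰ := hde ▸ m.2
      exact ⟨⟨(⟨d, (mul_mem_nonZeroDivisors.1 hmem).1⟩, ⟨e, (mul_mem_nonZeroDivisors.1 hmem).2⟩),
        Subtype.ext hde.symm⟩, rfl⟩

open scoped Classical in
theorem tsum_moebius_mul_fiber [Subsingleton αˣ] (G : α⁰ → ℝ) (m : α⁰) :
    ∑' x : {x : α⁰ × α⁰ // x.1 * x.2 = m}, (moebius (x.1.1 : α) : ℝ) * G (x.1.1 * x.1.2) =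
      if m = 1 then G m else 0 := by
  have hm : (m : α) ≠ 0 := nonZeroDivisors.coe_ne_zero m
  let _ : Fintype {d : α // d ∣ m} :=
    let _ : Fintype αˣ := Fintype.ofFinite αˣ
    fintypeSubtypeDvd (m : α) hm
  have hdiv : ∑ d : {d : α // d ∣ m}, moebius d.1 = if (m : α) = 1 then 1 else 0 := by
    rw [← sum_moebius_of_mem_iff_dvd hm
        (s := Finset.univ.map (.subtype (· ∣ (m : α)))) (by simp), Finset.sum_map]
    rfl
  calc _ = ∑' x, (moebius (factorizationEquivDivisor m x).1 : ℝ) * G m :=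
        tsum_congr fun x ↦ by rw [x.2]; rfl
    _ = ∑' d : {d : α // d ∣ m}, (moebius d.1 : ℝ) * G m :=
        (factorizationEquivDivisor m).tsum_eq fun d ↦ (moebius d.1 : ℝ) * G m
    _ = if m = 1 then G m else 0 := by
        rw [tsum_fintype, ← Finset.sum_mul, ← Int.cast_sum, hdiv]
        simp only [← OneMemClass.coe_eq_one (S' := α⁰)]
        split_ifs <;> simp

theorem tsum_moebius_mul_tsum [Subsingleton αˣ] (G : α⁰ → ℝ)
    (hG : Summable fun x : α⁰ × α⁰ ↦ (moebius (x.1 : α) : ℝ) * G (x.1 * x.2)) :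
    ∑' f : α⁰, (moebius (f : α) : ℝ) * ∑' g, G (f * g) = G 1 := by
  classical
  let e := Equiv.sigmaFiberEquiv fun x : α⁰ × α⁰ ↦ x.1 * x.2
  calc _ = ∑' x : α⁰ × α⁰, (moebius (x.1 : α) : ℝ) * G (x.1 * x.2) := by
        rw [hG.tsum_prod]
        exact tsum_congr fun f ↦ tsum_mul_left.symm
    _ = ∑' m, ∑' x : {x : α⁰ × α⁰ // x.1 * x.2 = m},
          (moebius (x.1.1 : α) : ℝ) * G (x.1.1 * x.1.2) := by
        rw [← e.tsum_eq]
        exact (e.summable_iff.2 hG).tsum_sigma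
    _ = G 1 := by
        rw [tsum_congr (tsum_moebius_mul_fiber G), tsum_ite_eq]

end Moebius

/-! ### A Tauberian argument over a monoid of divisors -/

section Tauberian

open UniqueFactorizationMonoid

variable {α : Type*} [CommMonoidWithZero α] {ν : α⁰ →* ℝ}

theorem finite_setOf_le_of_summable_inv (hν : ∀ f, 1 ≤ ν f) (hsum : Summable fun f ↦ (ν f)⁻¹)
    (Y : ℝ) : {f | ν f ≤ Y}.Finite := by
  have hY : (0 : ℝ) < (max Y 1)⁻¹ := by positivity
  have hev : ∀ᶠ f in cofinite, (ν f)⁻¹ < (max Y 1)⁻¹ :=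
    hsum.tendsto_cofinite_zero.eventually_lt_const hY
  refine (eventually_cofinite.1 hev).subset fun f hf ↦ ?_
  rw [Set.mem_ofPred_eq, not_lt]
  exact inv_anti₀ (one_pos.trans_le (hν f)) (le_max_of_le_left hf)

theorem exists_le_const_mul_of_tendsto_div {T : ℝ → ℝ} {κ : ℝ} (hmono : Monotone T)
    (hnonneg : ∀ Y, 0 ≤ T Y) (hzero : ∀ Y < 1, T Y = 0)
    (hlim : Tendsto (fun Y ↦ T Y / Y) atTop (𝓝 κ)) :
    ∃ C : ℝ, ∀ Y, 0 < Y → T Y ≤ C * Y := by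
  obtain ⟨Y₀, hY₀⟩ := eventually_atTop.1 (hlim.eventually_lt_const (lt_add_one κ))
  refine ⟨max (κ + 1) (T Y₀), fun Y hY ↦ ?_⟩
  rcases le_or_gt Y₀ Y with hlarge | hsmall
  · calc T Y ≤ (κ + 1) * Y := (div_le_iff₀ hY).1 (hY₀ Y hlarge).le
      _ ≤ _ := mul_le_mul_of_nonneg_right (le_max_left _ _) hY.le
  rcases lt_or_ge Y 1 with hlt | hge
  · rw [hzero Y hlt]
    exact mul_nonneg (le_max_of_le_right (hnonneg _)) hY.le
  · calc T Y ≤ T Y₀ := hmono hsmall.le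
      _ ≤ T Y₀ * Y := le_mul_of_one_le_right (hnonneg _) hge
      _ ≤ _ := mul_le_mul_of_nonneg_right (le_max_right _ _) hY.le

variable [UniqueFactorizationMonoid α]

theorem abs_cast_moebius_le_one (a : α) : |(moebius a : ℝ)| ≤ 1 := by
  exact_mod_cast abs_moebius_le_one a

theorem tendsto_tsum_moebius_mul_div {T : ℝ → ℝ} {κ C : ℝ} (hν : ∀ f, 1 ≤ ν f)
    (hsum : Summable fun f ↦ (ν f)⁻¹) (hnonneg : ∀ Y, 0 ≤ T Y)
    (hC : ∀ Y, 0 < Y → T Y ≤ C * Y) (hlim : Tendsto (fun Y ↦ T Y / Y) atTop (𝓝 κ)) :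
    Tendsto (fun Y ↦ ∑' f : α⁰, (moebius (f : α) : ℝ) * T (Y / ν f) / Y) atTop
      (𝓝 (∑' f : α⁰, (moebius (f : α) : ℝ) * (ν f)⁻¹ * κ)) := by
  have hpos (f : α⁰) : 0 < ν f := one_pos.trans_le (hν f)
  refine tendsto_tsum_of_dominated_convergence (bound := fun f ↦ C * (ν f)⁻¹)
    (hsum.mul_left C) (fun f ↦ ?_) ?_
  · have hscale : Tendsto (fun Y : ℝ ↦ Y / ν f) atTop atTop :=
      tendsto_id.atTop_div_const (hpos f)
    refine ((hlim.comp hscale).const_mul ((moebius (f : α) : ℝ) * (ν f)⁻¹)).congr fun Y ↦ ?_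
    have := (hpos f).ne'
    simp only [Function.comp_apply]
    field_simp
  · filter_upwards [eventually_gt_atTop 0] with Y hY f
    have hYf : 0 < Y / ν f := div_pos hY (hpos f)
    rw [norm_div, norm_mul, Real.norm_of_nonneg hY.le, Real.norm_of_nonneg (hnonneg _),
      div_le_iff₀ hY]
    calc ‖(moebius (f : α) : ℝ)‖ * T (Y / ν f) ≤ 1 * (C * (Y / ν f)) :=
          mul_le_mul (abs_cast_moebius_le_one _) (hC _ hYf) (hnonneg _) zero_le_one
      _ = C * (ν f)⁻¹ * Y := by ring

variable [Subsingleton αˣ] [Nontrivial α]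

theorem tsum_moebius_mul_inv (hν : ∀ f, 1 ≤ ν f) (hsum : Summable fun f ↦ (ν f)⁻¹) :
    ∑' f : α⁰, (moebius (f : α) : ℝ) * (ν f)⁻¹ = (∑' f, (ν f)⁻¹)⁻¹ := by
  have hnonneg (f : α⁰) : 0 ≤ (ν f)⁻¹ := inv_nonneg.2 (zero_le_one.trans (hν f))
  have hpairs : Summable fun x : α⁰ × α⁰ ↦ (moebius (x.1 : α) : ℝ) * (ν (x.1 * x.2))⁻¹ := by
    refine Summable.of_norm_bounded (hsum.mul_of_nonneg hsum hnonneg hnonneg) fun x ↦ ?_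
    rw [norm_mul, map_mul, mul_inv, Real.norm_of_nonneg (mul_nonneg (hnonneg _) (hnonneg _))]
    exact mul_le_of_le_one_left (mul_nonneg (hnonneg _) (hnonneg _)) (abs_cast_moebius_le_one _)
  refine eq_inv_of_mul_eq_one_left ?_
  have h := tsum_moebius_mul_tsum (fun f ↦ (ν f)⁻¹) hpairs
  simpa only [map_mul, mul_inv, tsum_mul_left, ← mul_assoc, tsum_mul_right, map_one,
    inv_one] using h

theorem eq_tsum_moebius_mul {Q T : ℝ → ℝ} (hν : ∀ f, 1 ≤ ν f)
    (hsum : Summable fun f ↦ (ν f)⁻¹) (hQ : ∀ Y < 1, Q Y = 0)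
    (hT : ∀ Y, T Y = ∑' g, Q (Y / ν g)) (Y : ℝ) :
    Q Y = ∑' f : α⁰, (moebius (f : α) : ℝ) * T (Y / ν f) := by
  have hfin := finite_setOf_le_of_summable_inv hν hsum Y
  have hpairs : Summable fun x : α⁰ × α⁰ ↦ (moebius (x.1 : α) : ℝ) * Q (Y / ν (x.1 * x.2)) := by
    refine summable_of_hasFiniteSupport ((hfin.prod hfin).subset fun ⟨f, g⟩ hfg ↦ ?_)
    have hpos : 0 < ν f * ν g := mul_pos (one_pos.trans_le (hν f)) (one_pos.trans_le (hν g))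
    have hle : ν f * ν g ≤ Y := by
      by_contra! hlt
      refine hfg (mul_eq_zero_of_right _ (hQ _ ?_))
      rwa [map_mul, div_lt_one hpos]
    exact ⟨(le_mul_of_one_le_right (zero_le_one.trans (hν f)) (hν g)).trans hle,
      (le_mul_of_one_le_left (zero_le_one.trans (hν g)) (hν f)).trans hle⟩
  have h := tsum_moebius_mul_tsum (fun f ↦ Q (Y / ν f)) hpairs
  simp only [map_one, div_one] at h
  simp only [← h, hT, map_mul, div_div]

theorem tendsto_div_of_eq_tsum {Q T : ℝ → ℝ} {κ : ℝ} (hν : ∀ f, 1 ≤ ν f)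
    (hsum : Summable fun f ↦ (ν f)⁻¹) (hQ : ∀ Y < 1, Q Y = 0)
    (hT : ∀ Y, T Y = ∑' g, Q (Y / ν g)) (hmono : Monotone T)
    (hlim : Tendsto (fun Y ↦ T Y / Y) atTop (𝓝 κ)) :
    Tendsto (fun Y ↦ Q Y / Y) atTop (𝓝 (κ / ∑' f, (ν f)⁻¹)) := by
  have hzero (Y : ℝ) (hY : Y < 1) : T Y = 0 := by
    rw [hT, tsum_congr fun g ↦ hQ _ ((div_lt_one (one_pos.trans_le (hν g))).2
      (hY.trans_le (hν g))), tsum_zero]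
  have hnonneg (Y : ℝ) : 0 ≤ T Y :=
    (hzero _ ((min_le_right Y 0).trans_lt one_pos)).symm.le.trans (hmono (min_le_left Y 0))
  obtain ⟨C, hC⟩ := exists_le_const_mul_of_tendsto_div hmono hnonneg hzero hlim
  have h := tendsto_tsum_moebius_mul_div hν hsum hnonneg hC hlim
  rw [tsum_mul_right, tsum_moebius_mul_inv hν hsum, ← div_eq_inv_mul] at h
  refine h.congr fun Y ↦ ?_
  rw [tsum_div_const, ← eq_tsum_moebius_mul hν hsum hQ hT]

end Tauberian

/-! ### The ideal sum defining `ζ_K(2)` -/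

section DedekindZeta

open Ideal

variable (K : Type*) [Field K] [NumberField K]

theorem sum_card_absNorm_eq (n : ℕ) :
    ∑ k ∈ Finset.Icc 1 n, Nat.card {I : Ideal (𝓞 K) // absNorm I = k} =
      Nat.card {I : (Ideal (𝓞 K))⁰ // absNorm (I : Ideal (𝓞 K)) ≤ n} := by
  rw [← add_left_inj 1, ← card_norm_le_eq_card_norm_le_add_one,
    show Finset.Icc 1 n = Finset.Ioc 0 n from Finset.Icc_succ_left_eq_Ioc _ _,
    show 1 = Nat.card {I : Ideal (𝓞 K) // absNorm I = 0} by simp [absNorm_eq_zero_iff],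
    Finset.sum_Ioc_add_eq_sum_Icc n.zero_le,
    ← Finset.card_preimage_eq_sum_card_image_eq fun k _ ↦ finite_setOfPred_absNorm_eq k]
  simp [Set.coe_eq_subtype]

theorem sum_card_absNorm_eq_isBigO :
    (fun n : ℕ ↦ ∑ k ∈ Finset.Icc 1 n,
      ‖(Nat.card {I : Ideal (𝓞 K) // absNorm I = k} : ℂ)‖) =O[atTop]
      fun n : ℕ ↦ (n : ℝ) ^ (1 : ℝ) := by
  have hlim := (tendsto_norm_le_div_atTop₀ K).comp tendsto_natCast_atTop_atTop
  refine ((hlim.isBigO_one ℝ).mul (Asymptotics.isBigO_refl (fun n : ℕ ↦ (n : ℝ)) atTop)).congr'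
    ?_ ?_
  · filter_upwards [eventually_ne_atTop 0] with n hn
    simp only [Function.comp_apply, Complex.norm_natCast, ← Nat.cast_sum, sum_card_absNorm_eq,
      Nat.cast_le]
    exact div_mul_cancel₀ _ (Nat.cast_ne_zero.2 hn)
  · filter_upwards with n
    rw [one_mul, Real.rpow_one]

theorem summable_card_absNorm_eq_div_sq :
    Summable fun n : ℕ ↦ (Nat.card {I : Ideal (𝓞 K) // absNorm I = n} : ℝ) / (n : ℝ) ^ 2 := by
  refine (LSeriesSummable_of_sum_norm_bigO (s := 2) (sum_card_absNorm_eq_isBigO K) zero_le_one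
    (by norm_num)).norm.congr fun n ↦ ?_
  rw [LSeries.norm_term_eq]
  split_ifs with hn
  · simp [hn]
  · simp

theorem summable_absNorm_sq_inv : Summable fun I : Ideal (𝓞 K) ↦ ((absNorm I : ℝ) ^ 2)⁻¹ := by
  let e := Equiv.sigmaFiberEquiv fun I : Ideal (𝓞 K) ↦ absNorm I
  have hnonneg : 0 ≤ (fun I : Ideal (𝓞 K) ↦ ((absNorm I : ℝ) ^ 2)⁻¹) ∘ e :=
    fun _ ↦ inv_nonneg.2 (sq_nonneg _)
  rw [← e.summable_iff, summable_sigma_of_nonneg hnonneg]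
  refine ⟨fun n ↦ ?_, (summable_card_absNorm_eq_div_sq K).congr fun n ↦ ?_⟩
  · have : Finite {I : Ideal (𝓞 K) // absNorm I = n} := finite_setOfPred_absNorm_eq n
    exact Summable.of_finite
  · have hconst (I : {I : Ideal (𝓞 K) // absNorm I = n}) :
        ((absNorm (e ⟨n, I⟩) : ℝ) ^ 2)⁻¹ = ((n : ℝ) ^ 2)⁻¹ :=
      congrArg (fun k : ℕ ↦ ((k : ℝ) ^ 2)⁻¹) I.2
    rw [Function.comp_def, tsum_congr hconst, tsum_const, nsmul_eq_mul, div_eq_mul_inv]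

/-- The squared ideal norm `I ↦ N(I)²`, the weight of the Dirichlet series for `ζ_K(2)`. -/
noncomputable def idealNormSq : (Ideal (𝓞 K))⁰ →* ℝ where
  toFun I := (absNorm (I : Ideal (𝓞 K)) : ℝ) ^ 2
  map_one' := by simp
  map_mul' I J := by simp [mul_pow]

theorem idealNormSq_apply (I : (Ideal (𝓞 K))⁰) :
    idealNormSq K I = (absNorm (I : Ideal (𝓞 K)) : ℝ) ^ 2 := rfl

theorem one_le_idealNormSq (I : (Ideal (𝓞 K))⁰) : 1 ≤ idealNormSq K I :=
  one_le_pow₀ (by exact_mod_cast absNorm_pos_of_nonZeroDivisors I)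

theorem summable_idealNormSq_inv : Summable fun I ↦ (idealNormSq K I)⁻¹ :=
  (summable_absNorm_sq_inv K).comp_injective Subtype.val_injective

theorem dedekindZetaTwo_eq_tsum : dedekindZetaTwo K = ∑' I, (idealNormSq K I)⁻¹ := by
  let e : (Ideal (𝓞 K))⁰ ≃ {I : Ideal (𝓞 K) // I ≠ ⊥} :=
    Equiv.subtypeEquivRight fun _ ↦ mem_nonZeroDivisors_iff_ne_zero
  rw [dedekindZetaTwo, ← e.tsum_eq]
  exact tsum_congr fun I ↦ zpow_neg _ 2

end DedekindZeta

/-! ### Quadratic extensions of number fields -/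

section QuadraticConjugation

variable (K L : Type*) [Field K] [Field L] [Algebra K L] [Algebra.IsQuadraticExtension K L]
  [IsGalois K L]

theorem card_algEquiv_of_isQuadraticExtension : Nat.card (L ≃ₐ[K] L) = 2 := by
  rw [IsGalois.card_aut_eq_finrank, Algebra.IsQuadraticExtension.finrank_eq_two]

theorem exists_algEquiv_ne_one : ∃ σ : L ≃ₐ[K] L, σ ≠ 1 := by
  have : Nontrivial (L ≃ₐ[K] L) := by
    rw [← Finite.one_lt_card_iff_nontrivial, card_algEquiv_of_isQuadraticExtension]
    exact one_lt_two
  exact exists_ne 1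

/-- The nontrivial automorphism of a quadratic Galois extension `L/K`. -/
noncomputable def quadConj : L ≃ₐ[K] L := (exists_algEquiv_ne_one K L).choose

theorem quadConj_ne_one : quadConj K L ≠ 1 := (exists_algEquiv_ne_one K L).choose_spec

variable {K L}

theorem eq_one_or_eq_quadConj (τ : L ≃ₐ[K] L) : τ = 1 ∨ τ = quadConj K L := by
  by_contra! hτ
  have hinj : Function.Injective ![1, quadConj K L, τ] := by
    have := quadConj_ne_one K L
    intro i j hij
    fin_cases i <;> fin_cases j <;> simp_all [eq_comm]
  have hcard := Nat.card_le_card_of_injective _ hinj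
  rw [card_algEquiv_of_isQuadraticExtension, Nat.card_fin] at hcard
  omega

theorem quadConj_quadConj (x : L) : quadConj K L (quadConj K L x) = x := by
  have hsq : quadConj K L * quadConj K L = 1 :=
    (eq_one_or_eq_quadConj _).resolve_right fun h ↦ quadConj_ne_one K L (mul_eq_left.1 h)
  exact DFunLike.congr_fun hsq x

theorem exists_algebraMap_eq_of_quadConj_eq {x : L} (hx : quadConj K L x = x) :
    ∃ a : K, algebraMap K L a = x := by
  refine IntermediateField.mem_bot.1 ((IsGalois.mem_bot_iff_fixed (F := K) (E := L) x).2 fun τ ↦ ?_)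
  rcases eq_one_or_eq_quadConj τ with rfl | rfl
  · rfl
  · exact hx

theorem algebraMap_trace_eq_add_quadConj (x : L) :
    algebraMap K L (Algebra.trace K L x) = x + quadConj K L x := by
  classical
  have huniv : (Finset.univ : Finset (L ≃ₐ[K] L)) = {1, quadConj K L} := by
    ext τ
    simpa using eq_one_or_eq_quadConj τ
  rw [trace_eq_sum_automorphisms, huniv, Finset.sum_pair (quadConj_ne_one K L).symm]
  rfl

end QuadraticConjugation

section Different

variable (K L : Type*) [Field K] [NumberField K] [Field L] [Algebra K L]
  [Algebra.IsQuadraticExtension K L]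

variable {L} in
theorem isIntegral_quadConj (x : 𝓞 L) : IsIntegral ℤ (quadConj K L x) :=
  x.isIntegral_coe.map ((quadConj K L).toAlgHom.restrictScalars ℤ)

variable [NumberField L]

theorem exists_quadConj_ne_self : ∃ x : 𝓞 L, quadConj K L x ≠ x := by
  by_contra! hfix
  refine quadConj_ne_one K L (AlgEquiv.ext fun y ↦ ?_)
  obtain ⟨a, b, -, rfl⟩ := IsFractionRing.div_surjective (A := 𝓞 L) y
  rw [map_div₀, hfix a, hfix b]
  rfl

/-- A generator `s` of `L = K(s)` with `s² ∈ K`. It is chosen as the inverse of some `x - x̄` with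
`x` integral, so that every difference `y - ȳ` with `y` integral is an integral multiple of `s`. -/
noncomputable def sqrtGen : L :=
  (((exists_quadConj_ne_self K L).choose : L) - quadConj K L (exists_quadConj_ne_self K L).choose)⁻¹

theorem sqrtGen_ne_zero : sqrtGen K L ≠ 0 :=
  inv_ne_zero (sub_ne_zero.2 (exists_quadConj_ne_self K L).choose_spec.symm)

theorem quadConj_sqrtGen : quadConj K L (sqrtGen K L) = -sqrtGen K L := by
  rw [sqrtGen, map_inv₀, map_sub, quadConj_quadConj, ← neg_sub, inv_neg]

theorem exists_algebraMap_eq_sqrtGen_sq : ∃ d : K, algebraMap K L d = sqrtGen K L ^ 2 :=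
  exists_algebraMap_eq_of_quadConj_eq (by rw [map_pow, quadConj_sqrtGen, neg_sq])

/-- The element `δ = s²` of `K`, for which `L = K(√δ)`. -/
noncomputable def radicand : K := (exists_algebraMap_eq_sqrtGen_sq K L).choose

theorem algebraMap_radicand : algebraMap K L (radicand K L) = sqrtGen K L ^ 2 :=
  (exists_algebraMap_eq_sqrtGen_sq K L).choose_spec

/-- The ideal of those `β` for which `β s = x - x̄` for some integer `x` of `L`. -/
def conjDiffIdeal : Ideal (𝓞 K) where
  carrier := {β | ∃ x : 𝓞 L, (x : L) - quadConj K L x = algebraMap K L β * sqrtGen K L}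
  zero_mem' := ⟨0, by simp⟩
  add_mem' := by
    rintro a b ⟨x, hx⟩ ⟨y, hy⟩
    refine ⟨x + y, ?_⟩
    simp only [map_add]
    linear_combination hx + hy
  smul_mem' := by
    rintro c b ⟨x, hx⟩
    refine ⟨algebraMap (𝓞 K) (𝓞 L) c * x, ?_⟩
    change algebraMap K L c * x - quadConj K L (algebraMap K L c * x) =
      algebraMap K L (c * b) * sqrtGen K L
    rw [map_mul, map_mul, AlgEquiv.commutes]
    linear_combination algebraMap K L c * hx

variable {K L} in
theorem mem_conjDiffIdeal {β : 𝓞 K} : β ∈ conjDiffIdeal K L ↔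
    ∃ x : 𝓞 L, (x : L) - quadConj K L x = algebraMap K L β * sqrtGen K L := Iff.rfl

variable {L} in
theorem exists_sub_quadConj_eq (x : 𝓞 L) :
    ∃ β ∈ conjDiffIdeal K L, (x : L) - quadConj K L x = algebraMap K L β * sqrtGen K L := by
  have hgen : IsIntegral ℤ (sqrtGen K L)⁻¹ := by
    rw [sqrtGen, inv_inv]
    exact (RingOfIntegers.isIntegral_coe _).sub (isIntegral_quadConj K _)
  obtain ⟨b, hb⟩ := exists_algebraMap_eq_of_quadConj_eq (K := K)
    (x := ((x : L) - quadConj K L x) * (sqrtGen K L)⁻¹) (by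
      rw [map_mul, map_sub, quadConj_quadConj, map_inv₀, quadConj_sqrtGen, inv_neg]
      ring)
  have hbint : IsIntegral ℤ b := by
    refine (isIntegral_algebraMap_iff (algebraMap K L).injective).1 ?_
    rw [hb]
    exact (x.isIntegral_coe.sub (isIntegral_quadConj K x)).mul hgen
  have hβ : (x : L) - quadConj K L x = algebraMap K L b * sqrtGen K L := by
    rw [hb, inv_mul_cancel_right₀ (sqrtGen_ne_zero K L)]
  exact ⟨⟨b, hbint⟩, ⟨x, hβ⟩, hβ⟩

theorem conjDiffIdeal_ne_bot : conjDiffIdeal K L ≠ ⊥ := by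
  obtain ⟨x, hx⟩ := exists_quadConj_ne_self K L
  obtain ⟨β, hβ, hxβ⟩ := exists_sub_quadConj_eq K x
  intro hbot
  rw [hbot, Ideal.mem_bot] at hβ
  rw [hβ, RingOfIntegers.coe_eq_algebraMap 0, map_zero, map_zero, zero_mul, sub_eq_zero] at hxβ
  exact hx hxβ.symm

/-- The fractional ideal `s · I𝓞_L` with `I = conjDiffIdeal K L`; it is the different of `L/K`. -/
noncomputable def conjDiffFractionalIdeal : FractionalIdeal (𝓞 L)⁰ L :=
  FractionalIdeal.spanSingleton (𝓞 L)⁰ (sqrtGen K L) *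
    ((conjDiffIdeal K L).map (algebraMap (𝓞 K) (𝓞 L)) : Ideal (𝓞 L))

theorem conjDiffFractionalIdeal_ne_zero : conjDiffFractionalIdeal K L ≠ 0 := by
  refine mul_ne_zero (FractionalIdeal.spanSingleton_ne_zero_iff.2 (sqrtGen_ne_zero K L))
    (FractionalIdeal.coeIdeal_ne_zero.2 ?_)
  rw [Ne, Ideal.map_eq_bot_iff_of_injective (FaithfulSMul.algebraMap_injective _ _)]
  exact conjDiffIdeal_ne_bot K L

variable {K L}

theorem mul_sqrtGen_mul_mem_one_of_mem_dual {y : L}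
    (hy : y ∈ FractionalIdeal.dual (𝓞 K) K (1 : FractionalIdeal (𝓞 L)⁰ L)) {β : 𝓞 K}
    (hβ : β ∈ conjDiffIdeal K L) :
    y * (sqrtGen K L * algebraMap K L β) ∈ (1 : FractionalIdeal (𝓞 L)⁰ L) := by
  obtain ⟨x, hx⟩ := mem_conjDiffIdeal.1 hβ
  have hdual := (FractionalIdeal.mem_dual (one_ne_zero (α := FractionalIdeal (𝓞 L)⁰ L))).1 hy
  obtain ⟨a, ha⟩ := hdual 1 (FractionalIdeal.one_mem_one _)
  obtain ⟨b, hb⟩ := hdual x ((FractionalIdeal.mem_one_iff _).2 ⟨x, rfl⟩)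
  replace ha := congrArg (algebraMap K L) ha
  replace hb := congrArg (algebraMap K L) hb
  rw [Algebra.traceForm_apply, algebraMap_trace_eq_add_quadConj, map_mul] at ha hb
  rw [map_one, mul_one, mul_one] at ha
  refine (FractionalIdeal.mem_one_iff _).2 ⟨algebraMap (𝓞 K) (𝓞 L) b -
    ⟨quadConj K L x, isIntegral_quadConj K x⟩ * algebraMap (𝓞 K) (𝓞 L) a, ?_⟩
  change algebraMap K L (algebraMap (𝓞 K) K b) -
    quadConj K L x * algebraMap K L (algebraMap (𝓞 K) K a) = _
  rw [ha, hb, mul_comm (sqrtGen K L), ← hx]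
  ring

theorem dual_one_le_inv_conjDiffFractionalIdeal :
    FractionalIdeal.dual (𝓞 K) K (1 : FractionalIdeal (𝓞 L)⁰ L) ≤
      (conjDiffFractionalIdeal K L)⁻¹ := by
  intro y hy
  rw [FractionalIdeal.mem_inv_iff (conjDiffFractionalIdeal_ne_zero K L)]
  intro z hz
  obtain ⟨z', hz', rfl⟩ := FractionalIdeal.mem_singleton_mul.1 hz
  obtain ⟨w, hw, rfl⟩ := (FractionalIdeal.mem_coeIdeal (𝓞 L)⁰).1 hz'
  rw [← mul_assoc]
  let N : Ideal (𝓞 L) := (1 : FractionalIdeal (𝓞 L)⁰ L).coeToSubmodule.comap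
    (LinearMap.mulLeft (𝓞 L) (y * sqrtGen K L) ∘ₗ Algebra.linearMap (𝓞 L) L)
  have hle : (conjDiffIdeal K L).map (algebraMap (𝓞 K) (𝓞 L)) ≤ N := by
    refine Ideal.map_le_iff_le_comap.2 fun β hβ ↦ ?_
    change y * sqrtGen K L * algebraMap K L β ∈ (1 : FractionalIdeal (𝓞 L)⁰ L)
    rw [mul_assoc]
    exact mul_sqrtGen_mul_mem_one_of_mem_dual hy hβ
  exact hle hw

theorem trace_mul_mem_conjDiffIdeal {v : L} (hv : v ∈ (conjDiffFractionalIdeal K L)⁻¹) {β : 𝓞 K}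
    (hβ : β ∈ conjDiffIdeal K L) :
    ∃ γ ∈ conjDiffIdeal K L, (γ : K) = Algebra.trace K L v * β := by
  rw [FractionalIdeal.mem_inv_iff (conjDiffFractionalIdeal_ne_zero K L)] at hv
  have hmem : sqrtGen K L * algebraMap K L β ∈ conjDiffFractionalIdeal K L :=
    FractionalIdeal.mem_singleton_mul.2 ⟨_, (FractionalIdeal.mem_coeIdeal (𝓞 L)⁰).2
      ⟨algebraMap (𝓞 K) (𝓞 L) β, Ideal.mem_map_of_mem _ hβ, rfl⟩, rfl⟩
  obtain ⟨w, hw⟩ := (FractionalIdeal.mem_one_iff _).1 (hv _ hmem)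
  obtain ⟨γ, hγ, hwγ⟩ := exists_sub_quadConj_eq K w
  refine ⟨γ, hγ, (algebraMap K L).injective (mul_right_cancel₀ (sqrtGen_ne_zero K L) ?_)⟩
  rw [← hwγ, map_mul, algebraMap_trace_eq_add_quadConj]
  change algebraMap (𝓞 L) L w - quadConj K L (algebraMap (𝓞 L) L w) = _
  rw [hw, map_mul, map_mul, quadConj_sqrtGen, AlgEquiv.commutes]
  ring

theorem exists_coe_eq_of_forall_mul_mem {I : Ideal (𝓞 K)} (hI : I ≠ ⊥) {a : K}
    (h : ∀ β ∈ I, ∃ γ ∈ I, (γ : K) = a * β) : ∃ b : 𝓞 K, (b : K) = a := by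
  have hle : FractionalIdeal.spanSingleton (𝓞 K)⁰ a * (I : FractionalIdeal (𝓞 K)⁰ K) ≤ I := by
    intro z hz
    obtain ⟨z', hz', rfl⟩ := FractionalIdeal.mem_singleton_mul.1 hz
    obtain ⟨β, hβ, rfl⟩ := (FractionalIdeal.mem_coeIdeal (𝓞 K)⁰).1 hz'
    exact (FractionalIdeal.mem_coeIdeal (𝓞 K)⁰).2 (h β hβ)
  have hmul := mul_le_mul_left hle (I : FractionalIdeal (𝓞 K)⁰ K)⁻¹
  rw [mul_assoc, mul_inv_cancel₀ (FractionalIdeal.coeIdeal_ne_zero.2 hI), mul_one] at hmul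
  exact (FractionalIdeal.mem_one_iff _).1 (hmul (FractionalIdeal.mem_spanSingleton_self _ _))

theorem inv_conjDiffFractionalIdeal_le_dual_one :
    (conjDiffFractionalIdeal K L)⁻¹ ≤
      FractionalIdeal.dual (𝓞 K) K (1 : FractionalIdeal (𝓞 L)⁰ L) := by
  intro y hy
  rw [FractionalIdeal.mem_dual (one_ne_zero (α := FractionalIdeal (𝓞 L)⁰ L))]
  intro a ha
  obtain ⟨a, rfl⟩ := (FractionalIdeal.mem_one_iff _).1 ha
  have hya : y * algebraMap (𝓞 L) L a ∈ (conjDiffFractionalIdeal K L)⁻¹ := by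
    rw [mul_comm, ← Algebra.smul_def]
    exact Submodule.smul_mem _ _ hy
  exact exists_coe_eq_of_forall_mul_mem (conjDiffIdeal_ne_bot K L) fun _ hβ ↦
    trace_mul_mem_conjDiffIdeal hya hβ

variable (K L)

theorem coe_differentIdeal_eq_conjDiffFractionalIdeal :
    (differentIdeal (𝓞 K) (𝓞 L) : FractionalIdeal (𝓞 L)⁰ L) = conjDiffFractionalIdeal K L := by
  rw [coeIdeal_differentIdeal (𝓞 K) K L (𝓞 L), inv_eq_iff_eq_inv]
  exact le_antisymm dual_one_le_inv_conjDiffFractionalIdeal inv_conjDiffFractionalIdeal_le_dual_one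

theorem abs_norm_sqrtGen : |Algebra.norm ℚ (sqrtGen K L)| = |Algebra.norm ℚ (radicand K L)| := by
  refine (sq_eq_sq_iff_abs_eq_abs _ _).1 ?_
  rw [← map_pow, ← algebraMap_radicand, ← Algebra.norm_norm (S := K), Algebra.norm_algebraMap,
    Algebra.IsQuadraticExtension.finrank_eq_two, map_pow]

theorem natAbs_discr_eq_of_isQuadraticExtension :
    ((discr L).natAbs : ℚ) = ((discr K).natAbs : ℚ) ^ 2 * |Algebra.norm ℚ (radicand K L)| *
      (Ideal.absNorm (conjDiffIdeal K L) : ℚ) ^ 2 := by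
  have hnorm := congrArg FractionalIdeal.absNorm (coe_differentIdeal_eq_conjDiffFractionalIdeal K L)
  rw [conjDiffFractionalIdeal, map_mul, FractionalIdeal.coeIdeal_absNorm,
    FractionalIdeal.coeIdeal_absNorm, FractionalIdeal.absNorm_span_singleton,
    Ideal.absNorm_algebraMap, ← IsFractionRing.finrank_eq (𝓞 K) K (𝓞 L) L,
    Algebra.IsQuadraticExtension.finrank_eq_two, abs_norm_sqrtGen K L] at hnorm
  rw [natAbs_discr_eq_absNorm_differentIdeal_mul_natAbs_discr_pow K (𝓞 K) L (𝓞 L),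
    Algebra.IsQuadraticExtension.finrank_eq_two]
  push_cast at hnorm ⊢
  rw [hnorm]
  ring

end Different

section SquareModFour

/-- `D` is the square of an element of `q` modulo `4q²`. -/
def IsSquareModFour {R : Type*} [CommRing R] (q : Ideal R) (D : R) : Prop :=
  ∃ t ∈ q, D - t ^ 2 ∈ Ideal.span {4} * q ^ 2

variable {K L : Type*} [Field K] [NumberField K] [Field L] [Algebra K L]
  {q : Ideal (𝓞 K)}

theorem exists_mem_mul_of_forall_mem_inv {A : Ideal (𝓞 K)} {a : K} (hq : q ≠ ⊥)
    (h : ∀ z ∈ (q : FractionalIdeal (𝓞 K)⁰ K)⁻¹, ∃ c ∈ A, (c : K) = z * a) :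
    ∃ c ∈ A * q, (c : K) = a := by
  have hle : FractionalIdeal.spanSingleton (𝓞 K)⁰ a * (q : FractionalIdeal (𝓞 K)⁰ K)⁻¹ ≤ A := by
    intro z hz
    obtain ⟨w, hw, rfl⟩ := FractionalIdeal.mem_singleton_mul.1 hz
    obtain ⟨c, hc, hcw⟩ := h w hw
    exact (FractionalIdeal.mem_coeIdeal (𝓞 K)⁰).2 ⟨c, hc, hcw.trans (mul_comm w a)⟩
  have hmul := mul_le_mul_left hle (q : FractionalIdeal (𝓞 K)⁰ K)
  rw [mul_assoc, inv_mul_cancel₀ (FractionalIdeal.coeIdeal_ne_zero.2 hq), mul_one,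
    ← FractionalIdeal.coeIdeal_mul] at hmul
  exact (FractionalIdeal.mem_coeIdeal (𝓞 K)⁰).1 (hmul (FractionalIdeal.mem_spanSingleton_self _ _))

theorem exists_mem_of_forall_isIntegral_mul {a : K} (hq : q ≠ ⊥)
    (h : ∀ z ∈ (q : FractionalIdeal (𝓞 K)⁰ K)⁻¹, IsIntegral ℤ (z * a)) :
    ∃ c ∈ q, (c : K) = a := by
  rw [← Ideal.top_mul q]
  exact exists_mem_mul_of_forall_mem_inv hq fun z hz ↦ ⟨⟨z * a, h z hz⟩, trivial, rfl⟩

theorem isIntegral_mul_of_mem_inv {z : K} {t : 𝓞 K} (hq : q ≠ ⊥)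
    (hz : z ∈ (q : FractionalIdeal (𝓞 K)⁰ K)⁻¹) (ht : t ∈ q) : IsIntegral ℤ (z * t) := by
  have hmem := (FractionalIdeal.mem_inv_iff (FractionalIdeal.coeIdeal_ne_zero.2 hq)).1 hz t
    ((FractionalIdeal.mem_coeIdeal (𝓞 K)⁰).2 ⟨t, ht, rfl⟩)
  obtain ⟨c, hc⟩ := (FractionalIdeal.mem_one_iff _).1 hmem
  exact hc ▸ c.isIntegral_coe

theorem isIntegral_sq_mul_of_mem_inv {z : K} {e : 𝓞 K} (hq : q ≠ ⊥)
    (hz : z ∈ (q : FractionalIdeal (𝓞 K)⁰ K)⁻¹) (he : e ∈ q ^ 2) :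
    IsIntegral ℤ (z ^ 2 * e) := by
  refine isIntegral_mul_of_mem_inv (pow_ne_zero 2 hq) ?_ he
  rw [FractionalIdeal.coeIdeal_pow, ← inv_pow, pow_two, pow_two]
  exact FractionalIdeal.mul_mem_mul hz hz

theorem isIntegral_of_sq_sub_mul_sub_eq_zero {R A : Type*} [CommRing R] [CommRing A] [Algebra R A]
    {x t e : A} (ht : IsIntegral R t) (he : IsIntegral R e) (hx : x ^ 2 - t * x - e = 0) :
    IsIntegral R x := by
  have hx' : IsIntegral (integralClosure R A) x := by
    refine ⟨.X ^ 2 - .C ⟨t, ht⟩ * .X - .C ⟨e, he⟩, by monicity!, ?_⟩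
    simpa using hx
  exact isIntegral_trans x hx'

/-- The condition `y ∈ q𝓞_L`, tested against `q⁻¹`. -/
def IsIntegralMultiple (q : Ideal (𝓞 K)) (y : L) : Prop :=
  ∀ z ∈ (q : FractionalIdeal (𝓞 K)⁰ K)⁻¹, IsIntegral ℤ (algebraMap K L z * y)

variable [Algebra.IsQuadraticExtension K L]

theorem isIntegralMultiple_quadConj {y : L} (hy : IsIntegralMultiple q y) :
    IsIntegralMultiple q (quadConj K L y) := by
  intro z hz
  rw [← AlgEquiv.commutes (quadConj K L), ← map_mul]
  exact (hy z hz).map ((quadConj K L).toAlgHom.restrictScalars ℤ)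

theorem exists_mem_algebraMap_eq_add_quadConj (hq : q ≠ ⊥) {y : L}
    (hy : IsIntegralMultiple q y) : ∃ t ∈ q, algebraMap K L (t : 𝓞 K) = y + quadConj K L y := by
  obtain ⟨a, ha⟩ := exists_algebraMap_eq_of_quadConj_eq (K := K) (x := y + quadConj K L y)
    (by rw [map_add, quadConj_quadConj, add_comm])
  obtain ⟨t, ht, rfl⟩ := exists_mem_of_forall_isIntegral_mul hq (a := a) fun z hz ↦ by
    refine (isIntegral_algebraMap_iff (algebraMap K L).injective).1 ?_
    rw [map_mul, ha, mul_add]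
    exact (hy z hz).add (isIntegralMultiple_quadConj hy z hz)
  exact ⟨t, ht, ha⟩

theorem exists_mem_sq_algebraMap_eq_mul_quadConj (hq : q ≠ ⊥) {y : L}
    (hy : IsIntegralMultiple q y) :
    ∃ n ∈ q ^ 2, algebraMap K L (n : 𝓞 K) = y * quadConj K L y := by
  obtain ⟨a, ha⟩ := exists_algebraMap_eq_of_quadConj_eq (K := K) (x := y * quadConj K L y)
    (by rw [map_mul, quadConj_quadConj, mul_comm])
  obtain ⟨n, hn, rfl⟩ := exists_mem_mul_of_forall_mem_inv (A := q) hq (a := a) fun z hz ↦ by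
    refine exists_mem_of_forall_isIntegral_mul hq fun w hw ↦ ?_
    refine (isIntegral_algebraMap_iff (algebraMap K L).injective).1 ?_
    rw [map_mul, map_mul, ha, show algebraMap K L w * (algebraMap K L z * (y * quadConj K L y)) =
      algebraMap K L w * y * (algebraMap K L z * quadConj K L y) by ring]
    exact (hy w hw).mul (isIntegralMultiple_quadConj hy z hz)
  exact ⟨n, pow_two q ▸ hn, ha⟩

variable [NumberField L] {D : 𝓞 K} {b : K}

theorem exists_mem_mul_of_isSquareModFour (hq : q ≠ ⊥) (hD : (D : K) = radicand K L * b ^ 2)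
    (h : IsSquareModFour q D) : ∃ c ∈ conjDiffIdeal K L * q, (c : K) = b := by
  obtain ⟨t, ht, htD⟩ := h
  obtain ⟨e, he, heD⟩ := Ideal.mem_span_singleton_mul.1 htD
  refine exists_mem_mul_of_forall_mem_inv hq fun z hz ↦ ?_
  let x : L := (algebraMap K L t + algebraMap K L b * sqrtGen K L) / 2
  have hquad : (algebraMap K L b * sqrtGen K L) ^ 2 - algebraMap K L t ^ 2 =
      4 * algebraMap K L e := by
    have := congrArg (fun y : 𝓞 K ↦ algebraMap K L y) heD
    simp only [map_sub, map_mul, map_pow, hD, algebraMap_radicand, map_ofNat] at this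
    linear_combination -this
  have hintegral : IsIntegral ℤ (algebraMap K L z * x) := by
    refine isIntegral_of_sq_sub_mul_sub_eq_zero (isIntegral_mul_of_mem_inv hq hz ht).algebraMap
      (isIntegral_sq_mul_of_mem_inv hq hz he).algebraMap ?_
    simp only [x, map_mul, map_pow]
    linear_combination algebraMap K L z ^ 2 / 4 * hquad
  obtain ⟨β, hβ, hxβ⟩ := exists_sub_quadConj_eq K (⟨_, hintegral⟩ : 𝓞 L)
  refine ⟨β, hβ, (algebraMap K L).injective (mul_right_cancel₀ (sqrtGen_ne_zero K L) ?_)⟩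
  rw [← hxβ]
  change algebraMap K L z * x - quadConj K L (algebraMap K L z * x) = _
  simp only [x, map_mul, map_div₀, map_add, AlgEquiv.commutes, quadConj_sqrtGen, map_ofNat]
  ring

theorem exists_isIntegralMultiple_sub_quadConj_eq (hq : q ≠ ⊥) {c : 𝓞 K}
    (hc : c ∈ conjDiffIdeal K L * q) :
    ∃ y : L, IsIntegralMultiple q y ∧ y - quadConj K L y = algebraMap K L c * sqrtGen K L := by
  induction hc using Submodule.mul_induction_on' with
  | mem_mul_mem β hβ r hr =>
    obtain ⟨x, hx⟩ := mem_conjDiffIdeal.1 hβ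
    refine ⟨algebraMap K L r * x, fun z hz ↦ ?_, ?_⟩
    · rw [← mul_assoc, ← map_mul]
      exact (isIntegral_mul_of_mem_inv hq hz hr).algebraMap.mul x.isIntegral_coe
    · rw [map_mul, AlgEquiv.commutes, ← mul_sub, hx]
      simp only [map_mul]
      ring
  | add u _ v _ hu hv =>
    obtain ⟨y, hy, hyu⟩ := hu
    obtain ⟨w, hw, hwv⟩ := hv
    refine ⟨y + w, fun z hz ↦ ?_, ?_⟩
    · rw [mul_add]
      exact (hy z hz).add (hw z hz)
    · simp only [map_add]
      linear_combination hyu + hwv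

theorem isSquareModFour_of_mem_mul (hq : q ≠ ⊥) {c : 𝓞 K} (hc : c ∈ conjDiffIdeal K L * q)
    (hD : (D : K) = radicand K L * c ^ 2) : IsSquareModFour q D := by
  obtain ⟨y, hy, hyc⟩ := exists_isIntegralMultiple_sub_quadConj_eq hq hc
  obtain ⟨t, ht, hty⟩ := exists_mem_algebraMap_eq_add_quadConj hq hy
  obtain ⟨n, hn, hny⟩ := exists_mem_sq_algebraMap_eq_mul_quadConj hq hy
  refine ⟨t, ht, Ideal.mem_span_singleton_mul.2 ⟨-n, neg_mem hn, ?_⟩⟩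
  refine RingOfIntegers.ext ((algebraMap K L).injective ?_)
  simp only [map_mul, map_neg, map_sub, map_pow, map_ofNat, hD, algebraMap_radicand, hty, hny]
  linear_combination (y - quadConj K L y + algebraMap K L c * sqrtGen K L) * hyc

end SquareModFour

section Radicand

variable {K L : Type*} [Field K] [NumberField K] [Field L] [NumberField L] [Algebra K L]
  [Algebra.IsQuadraticExtension K L]

variable (K L) in
theorem radicand_ne_zero : radicand K L ≠ 0 := by
  intro h
  have hsq := algebraMap_radicand K L
  rw [h, map_zero] at hsq
  exact sqrtGen_ne_zero K L (pow_eq_zero_iff two_ne_zero |>.1 hsq.symm)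

variable (K) in
theorem exists_eq_add_mul_sqrtGen (x : L) :
    ∃ a b : K, x = algebraMap K L a + algebraMap K L b * sqrtGen K L := by
  have hs := sqrtGen_ne_zero K L
  obtain ⟨a, ha⟩ := exists_algebraMap_eq_of_quadConj_eq (K := K) (x := (x + quadConj K L x) / 2)
    (by rw [map_div₀, map_add, quadConj_quadConj, map_ofNat, add_comm])
  obtain ⟨b, hb⟩ := exists_algebraMap_eq_of_quadConj_eq (K := K)
    (x := (x - quadConj K L x) / (2 * sqrtGen K L)) (by
      rw [map_div₀, map_sub, map_mul, quadConj_quadConj, map_ofNat, quadConj_sqrtGen, mul_neg,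
        div_neg, ← neg_div, neg_sub])
  refine ⟨a, b, ?_⟩
  rw [ha, hb]
  field_simp
  ring

theorem not_isSquare_radicand_mul_sq {g : K} (hg : g ≠ 0) :
    ¬IsSquare (radicand K L * g ^ 2) := by
  rintro ⟨k, hk⟩
  have hsq : (sqrtGen K L * algebraMap K L g) ^ 2 = algebraMap K L k ^ 2 := by
    rw [mul_pow, ← algebraMap_radicand, ← map_pow, ← map_mul, hk, map_mul, pow_two]
  have hconj : quadConj K L (sqrtGen K L * algebraMap K L g) = sqrtGen K L * algebraMap K L g := by
    rcases sq_eq_sq_iff_eq_or_eq_neg.1 hsq with h | h <;>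
      simp only [h, map_neg, AlgEquiv.commutes]
  rw [map_mul, quadConj_sqrtGen, AlgEquiv.commutes, neg_mul] at hconj
  exact mul_ne_zero (sqrtGen_ne_zero K L) ((map_ne_zero _).2 hg) (neg_eq_self.1 hconj)

theorem exists_eq_radicand_mul_sq {D : K} (hD : ¬IsSquare D) {a : L}
    (ha : a ^ 2 = algebraMap K L D) : ∃ b : K, D = radicand K L * b ^ 2 := by
  have hs := sqrtGen_ne_zero K L
  have hconj_sq : quadConj K L a ^ 2 = a ^ 2 := by rw [← map_pow, ha, AlgEquiv.commutes]
  have hconj : quadConj K L a = -a := by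
    refine (sq_eq_sq_iff_eq_or_eq_neg.1 hconj_sq).resolve_left fun hfix ↦ hD ?_
    obtain ⟨k, rfl⟩ := exists_algebraMap_eq_of_quadConj_eq hfix
    exact ⟨k, (algebraMap K L).injective (by rw [← ha, map_mul, pow_two])⟩
  obtain ⟨b, hb⟩ := exists_algebraMap_eq_of_quadConj_eq (K := K) (x := a / sqrtGen K L)
    (by rw [map_div₀, hconj, quadConj_sqrtGen, neg_div_neg_eq])
  refine ⟨b, (algebraMap K L).injective ?_⟩
  rw [← ha, map_mul, map_pow, hb, algebraMap_radicand]
  field_simp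

theorem isIntegral_radicand_mul_sq {g : 𝓞 K} (hg : g ∈ conjDiffIdeal K L) :
    IsIntegral ℤ (radicand K L * g ^ 2) := by
  obtain ⟨x, hx⟩ := mem_conjDiffIdeal.1 hg
  refine (isIntegral_algebraMap_iff (algebraMap K L).injective).1 ?_
  rw [map_mul, map_pow, algebraMap_radicand, mul_comm, ← mul_pow, ← hx]
  exact (x.isIntegral_coe.sub (isIntegral_quadConj K x)).pow 2

end Radicand

/-! ### Parametrization of quadratic extensions by squares modulo four -/

section Parametrization

variable (K : Type*) [Field K] [NumberField K]

/-- The quadratic extensions of `K` inside its algebraic closure. -/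
abbrev QuadraticExt :=
  {L : IntermediateField K (AlgebraicClosure K) // Module.finrank K L = 2}

variable {K}

instance (L : QuadraticExt K) : Algebra.IsQuadraticExtension K L.1 := ⟨L.2⟩

instance (L : QuadraticExt K) : NumberField L.1 := NumberField.of_module_finite K L.1

/-- A chosen integral ideal in each ideal class. -/
noncomputable def classRep (c : ClassGroup (𝓞 K)) : (Ideal (𝓞 K))⁰ :=
  Function.surjInv (ClassGroup.mk0_surjective (R := 𝓞 K)) c

theorem mk0_classRep (c : ClassGroup (𝓞 K)) : ClassGroup.mk0 (classRep c) = c :=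
  Function.surjInv_eq _ c

theorem classRep_ne_bot (c : ClassGroup (𝓞 K)) : (classRep c : Ideal (𝓞 K)) ≠ ⊥ :=
  nonZeroDivisors.coe_ne_zero _

/-- `(c, D)` is a parameter of `(L, f)` if `D = δ g²`, where `δ` is the radicand of `L`, `g`
generates `f I q`, `I` is the conjugate-difference ideal of `L` and `q` represents `c`. -/
def IsParam (x : QuadraticExt K × (Ideal (𝓞 K))⁰) (y : ClassGroup (𝓞 K) × 𝓞 K) : Prop :=
  ∃ g : 𝓞 K, g ≠ 0 ∧
    (x.2 : Ideal (𝓞 K)) * conjDiffIdeal K x.1.1 * classRep y.1 = Ideal.span {g} ∧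
    (y.2 : K) = radicand K x.1.1 * g ^ 2

theorem natCast_absNorm_span_singleton (g : 𝓞 K) :
    (Ideal.absNorm (Ideal.span {g}) : ℚ) = |Algebra.norm ℚ (g : K)| := by
  rw [Ideal.absNorm_span_singleton, ← Algebra.coe_norm_int, Nat.cast_natAbs, Int.cast_abs]

variable {x x' : QuadraticExt K × (Ideal (𝓞 K))⁰} {y y' : ClassGroup (𝓞 K) × 𝓞 K}

theorem sq_discr_mul_abs_norm_of_isParam (h : IsParam x y) :
    ((discr K).natAbs : ℚ) ^ 2 * |Algebra.norm ℚ (y.2 : K)| =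
      (discr x.1.1).natAbs * (Ideal.absNorm (x.2 : Ideal (𝓞 K)) : ℚ) ^ 2 *
        (Ideal.absNorm (classRep y.1 : Ideal (𝓞 K)) : ℚ) ^ 2 := by
  obtain ⟨g, -, hspan, hD⟩ := h
  rw [hD, map_mul, map_pow, abs_mul, abs_pow, ← natCast_absNorm_span_singleton, ← hspan,
    natAbs_discr_eq_of_isQuadraticExtension K x.1.1, map_mul, map_mul]
  push_cast
  ring

theorem le_of_radicand_mul_sq_eq {L L' : QuadraticExt K} {g g' : K} (hg : g ≠ 0)
    (h : radicand K L.1 * g ^ 2 = radicand K L'.1 * g' ^ 2) : L.1 ≤ L'.1 := by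
  let Ω := AlgebraicClosure K
  have hsq : (algebraMap K Ω g * (sqrtGen K L.1 : Ω)) ^ 2 =
      (algebraMap K Ω g' * (sqrtGen K L'.1 : Ω)) ^ 2 := by
    have hrad (M : QuadraticExt K) : (sqrtGen K M.1 : Ω) ^ 2 = algebraMap K Ω (radicand K M.1) :=
      congrArg (algebraMap M.1 Ω) (algebraMap_radicand K M.1).symm
    rw [mul_pow, mul_pow, hrad, hrad, ← map_pow, ← map_pow, ← map_mul, ← map_mul, mul_comm, h,
      mul_comm]
  have hmem' : algebraMap K Ω g' * (sqrtGen K L'.1 : Ω) ∈ L'.1 :=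
    mul_mem (L'.1.algebraMap_mem _) (sqrtGen K L'.1).2
  have hmem : algebraMap K Ω g * (sqrtGen K L.1 : Ω) ∈ L'.1 := by
    rcases sq_eq_sq_iff_eq_or_eq_neg.1 hsq with h | h
    · exact h ▸ hmem'
    · exact h ▸ neg_mem hmem'
  have hs : (sqrtGen K L.1 : Ω) ∈ L'.1 := by
    rw [← inv_mul_cancel_left₀ ((map_ne_zero (algebraMap K Ω)).2 hg) (sqrtGen K L.1 : Ω)]
    exact mul_mem (inv_mem (L'.1.algebraMap_mem _)) hmem
  intro z hz
  obtain ⟨a, b, hab⟩ := exists_eq_add_mul_sqrtGen K (⟨z, hz⟩ : L.1)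
  rw [show z = algebraMap K Ω a + algebraMap K Ω b * sqrtGen K L.1 from congrArg Subtype.val hab]
  exact add_mem (L'.1.algebraMap_mem _) (mul_mem (L'.1.algebraMap_mem _) hs)

theorem span_singleton_eq_of_sq_eq_sq {R : Type*} [CommRing R] [NoZeroDivisors R] {a b : R}
    (h : a ^ 2 = b ^ 2) : Ideal.span {a} = Ideal.span {b} := by
  rcases sq_eq_sq_iff_eq_or_eq_neg.1 h with rfl | rfl
  · rfl
  · rw [Ideal.span_singleton_neg]

theorem eq_of_isParam (h : IsParam x y) (h' : IsParam x' y) : x = x' := by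
  obtain ⟨L, f⟩ := x
  obtain ⟨L', f'⟩ := x'
  obtain ⟨g, hg0, hspan, hD⟩ := h
  obtain ⟨g', hg0', hspan', hD'⟩ := h'
  obtain rfl : L = L' := Subtype.ext <| le_antisymm
    (le_of_radicand_mul_sq_eq (RingOfIntegers.coe_ne_zero_iff.2 hg0) (hD.symm.trans hD'))
    (le_of_radicand_mul_sq_eq (RingOfIntegers.coe_ne_zero_iff.2 hg0') (hD'.symm.trans hD))
  have hgg' : g ^ 2 = g' ^ 2 := RingOfIntegers.ext <| by
    simpa [radicand_ne_zero K L.1] using hD.symm.trans hD'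
  have hideal := hspan.trans ((span_singleton_eq_of_sq_eq_sq hgg').trans hspan'.symm)
  have hf : (f : Ideal (𝓞 K)) = f' := mul_right_cancel₀ (conjDiffIdeal_ne_bot K L.1)
    (mul_right_cancel₀ (classRep_ne_bot y.1) hideal)
  rw [Subtype.ext hf]

theorem mk0_mul_mk0_eq_one_iff {A B : (Ideal (𝓞 K))⁰} :
    ClassGroup.mk0 A * ClassGroup.mk0 B = 1 ↔
      ∃ g : 𝓞 K, (A : Ideal (𝓞 K)) * B = Ideal.span {g} := by
  rw [← map_mul, ClassGroup.mk0_eq_one_iff (A * B).2, Submodule.isPrincipal_iff]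
  rfl

/-- `conjDiffIdeal` as an element of the monoid of nonzero ideals. -/
noncomputable def conjDiffIdeal₀ (L : QuadraticExt K) : (Ideal (𝓞 K))⁰ :=
  ⟨conjDiffIdeal K L.1, mem_nonZeroDivisors_of_ne_zero (conjDiffIdeal_ne_bot K L.1)⟩

theorem exists_unit_of_isParam (h : IsParam x y) (h' : IsParam x y') :
    y'.1 = y.1 ∧ ∃ u : (𝓞 K)ˣ, y'.2 = ↑(u ^ 2) * y.2 := by
  obtain ⟨c, D⟩ := y
  obtain ⟨c', D'⟩ := y'
  obtain ⟨g, -, hspan, hD⟩ := h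
  obtain ⟨g', -, hspan', hD'⟩ := h'
  have hclass := mk0_mul_mk0_eq_one_iff.2 ⟨g, show ((x.2 * conjDiffIdeal₀ x.1 : (Ideal (𝓞 K))⁰) :
    Ideal (𝓞 K)) * classRep c = _ from hspan⟩
  have hclass' := mk0_mul_mk0_eq_one_iff.2 ⟨g', show ((x.2 * conjDiffIdeal₀ x.1 : (Ideal (𝓞 K))⁰) :
    Ideal (𝓞 K)) * classRep c' = _ from hspan'⟩
  rw [mk0_classRep] at hclass hclass'
  obtain rfl : c' = c := mul_left_cancel (hclass'.trans hclass.symm)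
  obtain ⟨u, hu⟩ := Ideal.span_singleton_eq_span_singleton.1 (hspan.symm.trans hspan')
  refine ⟨rfl, u, RingOfIntegers.ext ?_⟩
  simp only [map_mul, Units.val_pow_eq_pow_val, map_pow, hD, hD', ← hu]
  ring

theorem isParam_unit_sq_mul (h : IsParam x y) (u : (𝓞 K)ˣ) :
    IsParam x (y.1, ↑(u ^ 2) * y.2) := by
  obtain ⟨g, hg0, hspan, hD⟩ := h
  refine ⟨u * g, mul_ne_zero u.ne_zero hg0, ?_, ?_⟩
  · rw [Ideal.span_singleton_mul_left_unit u.isUnit, hspan]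
  · simp only [map_mul, Units.val_pow_eq_pow_val, map_pow, hD]
    ring

variable (K) in
/-- The pairs `(c, D)` with `D` a nonsquare of `K` that is a square modulo four in the ideal
representing `c`. -/
def ParamSet : Set (ClassGroup (𝓞 K) × 𝓞 K) :=
  {y | IsSquareModFour (classRep y.1 : Ideal (𝓞 K)) y.2 ∧ ¬IsSquare (y.2 : K)}

theorem isParam_mem_paramSet (h : IsParam x y) : y ∈ ParamSet K := by
  obtain ⟨g, hg0, hspan, hD⟩ := h
  have hg : g ∈ conjDiffIdeal K x.1.1 * classRep y.1 := by
    refine Ideal.mul_le_right (I := (x.2 : Ideal (𝓞 K))) ?_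
    rw [← mul_assoc, hspan]
    exact Ideal.mem_span_singleton_self g
  refine ⟨isSquareModFour_of_mem_mul (classRep_ne_bot _) hg hD, ?_⟩
  rw [hD]
  exact not_isSquare_radicand_mul_sq (RingOfIntegers.coe_ne_zero_iff.2 hg0)

theorem exists_isParam (x : QuadraticExt K × (Ideal (𝓞 K))⁰) : ∃ y, IsParam x y := by
  obtain ⟨L, f⟩ := x
  let c := (ClassGroup.mk0 (f * conjDiffIdeal₀ L))⁻¹
  obtain ⟨g, hg⟩ := mk0_mul_mk0_eq_one_iff.1
    (show ClassGroup.mk0 (f * conjDiffIdeal₀ L) * ClassGroup.mk0 (classRep c) = 1 by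
      rw [mk0_classRep, mul_inv_cancel])
  have hspan : (f : Ideal (𝓞 K)) * conjDiffIdeal K L.1 * classRep c = Ideal.span {g} := hg
  have hg0 : g ≠ 0 := by
    rintro rfl
    rw [Ideal.span_singleton_zero] at hspan
    exact mul_ne_zero (mul_ne_zero (nonZeroDivisors.coe_ne_zero f) (conjDiffIdeal_ne_bot K L.1))
      (classRep_ne_bot c) hspan
  have hgI : g ∈ conjDiffIdeal K L.1 :=
    Ideal.mul_le_left.trans Ideal.mul_le_right (hspan ▸ Ideal.mem_span_singleton_self g)
  exact ⟨(c, ⟨_, isIntegral_radicand_mul_sq hgI⟩), g, hg0, hspan, rfl⟩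

theorem exists_quadraticExt_sq_eq {D : K} (hD : ¬IsSquare D) :
    ∃ (L : QuadraticExt K) (a : L.1), a ^ 2 = algebraMap K L.1 D := by
  obtain ⟨α, hα⟩ := IsAlgClosed.exists_pow_nat_eq (algebraMap K (AlgebraicClosure K) D) two_pos
  have hirr : Irreducible (.X ^ 2 - .C D : Polynomial K) :=
    X_pow_sub_C_irreducible_of_prime Nat.prime_two fun b hb ↦ hD ⟨b, by rw [← hb, pow_two]⟩
  have hmin : .X ^ 2 - .C D = minpoly K α :=
    minpoly.eq_of_irreducible_of_monic hirr (by simp [hα]) (by monicity!)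
  have hfinrank : Module.finrank K (IntermediateField.adjoin K {α}) = 2 := by
    rw [IntermediateField.adjoin.finrank (Algebra.IsIntegral.isIntegral α), ← hmin]
    compute_degree!
  exact ⟨⟨_, hfinrank⟩, ⟨α, IntermediateField.mem_adjoin_simple_self K α⟩, Subtype.ext hα⟩

theorem exists_isParam_of_mem_paramSet (hy : y ∈ ParamSet K) : ∃ x, IsParam x y := by
  obtain ⟨c, D⟩ := y
  obtain ⟨hsq, hns⟩ := hy
  obtain ⟨L, a, ha⟩ := exists_quadraticExt_sq_eq hns
  obtain ⟨b, hb⟩ := exists_eq_radicand_mul_sq hns ha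
  obtain ⟨g, hg, rfl⟩ := exists_mem_mul_of_isSquareModFour (classRep_ne_bot c) hb hsq
  have hg0 : g ≠ 0 := by
    rintro rfl
    exact hns ⟨0, by simpa using hb⟩
  obtain ⟨f, hf⟩ := Ideal.dvd_iff_le.2 ((Ideal.span_singleton_le_iff_mem _).2 hg)
  have hf0 : f ≠ 0 := by
    rintro rfl
    rw [mul_zero, Submodule.zero_eq_bot, Ideal.span_singleton_eq_bot] at hf
    exact hg0 hf
  refine ⟨(L, ⟨f, mem_nonZeroDivisors_of_ne_zero hf0⟩), g, hg0, ?_, hb⟩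
  rw [hf, mul_comm _ f, mul_assoc]

variable (K) in
/-- The group of squares of units; parameters of a given `(L, f)` form a torsor under it. -/
abbrev UnitSquares : Subgroup (𝓞 K)ˣ := (powMonoidHom 2 : (𝓞 K)ˣ →* (𝓞 K)ˣ).range

/-- The parameter `v · D` of `(L, f)`, where `(c, D)` is a chosen one. -/
noncomputable def paramOf (z : (QuadraticExt K × (Ideal (𝓞 K))⁰) × UnitSquares K) :
    ClassGroup (𝓞 K) × 𝓞 K :=
  ((exists_isParam z.1).choose.1, z.2.1 * (exists_isParam z.1).choose.2)

theorem isParam_paramOf (z : (QuadraticExt K × (Ideal (𝓞 K))⁰) × UnitSquares K) :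
    IsParam z.1 (paramOf z) := by
  obtain ⟨x, _, u, rfl⟩ := z
  exact isParam_unit_sq_mul (exists_isParam x).choose_spec u

theorem paramOf_injective : Function.Injective (paramOf (K := K)) := by
  intro z z' h
  have hx : z.1 = z'.1 := eq_of_isParam (isParam_paramOf z) (h ▸ isParam_paramOf z')
  obtain ⟨x, v⟩ := z
  obtain ⟨x', v'⟩ := z'
  obtain rfl : x = x' := hx
  have hD : (exists_isParam x).choose.2 ≠ 0 := by
    intro hzero
    refine (isParam_mem_paramSet (exists_isParam x).choose_spec).2 ⟨0, ?_⟩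
    simp [hzero]
  have hv : (v.1 : 𝓞 K) = v'.1 := mul_right_cancel₀ hD (congrArg Prod.snd h)
  rw [Subtype.ext (Units.ext hv)]

theorem range_paramOf : Set.range (paramOf (K := K)) = ParamSet K := by
  refine Set.Subset.antisymm ?_ fun y hy ↦ ?_
  · rintro _ ⟨z, rfl⟩
    exact isParam_mem_paramSet (isParam_paramOf z)
  · obtain ⟨x, hx⟩ := exists_isParam_of_mem_paramSet hy
    obtain ⟨hc, u, hD⟩ := exists_unit_of_isParam (exists_isParam x).choose_spec hx
    exact ⟨(x, ⟨u ^ 2, u, rfl⟩), Prod.ext hc.symm hD.symm⟩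

variable (K) in
/-- Quadratic extensions weighted by a nonzero ideal and a unit square correspond to pairs `(c, D)`
with `D` a nonsquare that is a square modulo four. -/
noncomputable def paramEquiv :
    (QuadraticExt K × (Ideal (𝓞 K))⁰) × UnitSquares K ≃ ParamSet K :=
  (Equiv.ofInjective paramOf paramOf_injective).trans (Equiv.setCongr range_paramOf)

theorem sq_discr_mul_abs_norm_paramEquiv
    (z : (QuadraticExt K × (Ideal (𝓞 K))⁰) × UnitSquares K) :
    ((discr K).natAbs : ℚ) ^ 2 * |Algebra.norm ℚ ((paramEquiv K z).1.2 : K)| =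
      (discr z.1.1.1).natAbs * (Ideal.absNorm (z.1.2 : Ideal (𝓞 K)) : ℚ) ^ 2 *
        (Ideal.absNorm (classRep (paramEquiv K z).1.1 : Ideal (𝓞 K)) : ℚ) ^ 2 :=
  sq_discr_mul_abs_norm_of_isParam (isParam_paramOf z)

end Parametrization

/-! ### Lattice points of an imaginary quadratic field -/

section ImaginaryQuadratic

open InfinitePlace Ideal MeasureTheory mixedEmbedding euclidean

variable (K : Type*) [Field K] [NumberField K]

/-- `normCount S Y` is the number of elements of `S ⊆ 𝓞 K` whose norm has absolute value at most
`Y`. If infinitely many elements qualify, which cannot happen for imaginary quadratic `K`, it takes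
the junk value `0`. -/
noncomputable def normCount (S : Set (𝓞 K)) (Y : ℝ) : ℕ :=
  Nat.card {x : 𝓞 K // x ∈ S ∧ ((|Algebra.norm ℚ (x : K)| : ℚ) : ℝ) ≤ Y}

open scoped Classical in
/-- The image of the ideal `J` in the Euclidean version of the mixed space, whose inner product
is needed to count its points. -/
noncomputable abbrev euclideanIdealLattice (J : (Ideal (𝓞 K))⁰) :
    Submodule ℤ (euclidean.mixedSpace K) :=
  ZLattice.comap ℝ (idealLattice K (FractionalIdeal.mk0 K J)) (toMixed K).toLinearMap

variable {K} in
theorem mem_euclideanIdealLattice {J : (Ideal (𝓞 K))⁰} {v : euclidean.mixedSpace K} :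
    v ∈ euclideanIdealLattice K J ↔
      ∃ x ∈ (J : Ideal (𝓞 K)), (toMixed K).symm (mixedEmbedding K (x : K)) = v := by
  rw [euclideanIdealLattice, ZLattice.comap, Submodule.mem_comap, mem_idealLattice]
  simp [ContinuousLinearEquiv.symm_apply_eq]

variable {K} in
theorem normCount_ideal_eq_card (J : (Ideal (𝓞 K))⁰) (Y : ℝ) :
    normCount K (J : Ideal (𝓞 K)) Y = Nat.card ({v ∈ Set.univ |
      mixedEmbedding.norm (toMixed K v) ≤ Y} ∩ euclideanIdealLattice K J :
        Set (euclidean.mixedSpace K)) := by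
  refine Nat.card_eq_of_bijective
    (fun x ↦ ⟨(toMixed K).symm (mixedEmbedding K (x.1 : K)), ?_,
      mem_euclideanIdealLattice.2 ⟨x.1, x.2.1, rfl⟩⟩) ⟨fun x y hxy ↦ ?_, ?_⟩
  · simpa [mixedEmbedding.norm_eq_norm] using x.2.2
  · simpa [Subtype.ext_iff, (mixedEmbedding_injective K).eq_iff] using hxy
  · rintro ⟨v, hv, hvJ⟩
    obtain ⟨x, hx, rfl⟩ := mem_euclideanIdealLattice.1 hvJ
    exact ⟨⟨x, hx, by simpa [mixedEmbedding.norm_eq_norm] using hv⟩, rfl⟩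

open scoped Classical in
theorem volume_frontier_preimage_toMixed_closedBall :
    volume (frontier (toMixed K ⁻¹' Metric.closedBall 0 1)) = 0 := by
  rw [← (toMixed K).coe_toHomeomorph, ← Homeomorph.preimage_frontier,
    (toMixed K).coe_toHomeomorph, (volumePreserving_toMixed K).measure_preimage
      measurableSet_frontier.nullMeasurableSet, frontier_closedBall _ one_ne_zero,
    Measure.addHaar_sphere]

variable [Algebra.IsQuadraticExtension ℚ K] [IsTotallyComplex K]

theorem nrComplexPlaces_eq_one : nrComplexPlaces K = 1 := by
  have := IsTotallyComplex.finrank K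
  rw [Algebra.IsQuadraticExtension.finrank_eq_two ℚ K] at this
  lia

theorem card_infinitePlace_eq_one : Fintype.card (InfinitePlace K) = 1 := by
  rw [card_eq_nrRealPlaces_add_nrComplexPlaces, IsTotallyComplex.nrRealPlaces_eq_zero,
    nrComplexPlaces_eq_one]

open scoped Classical in
variable {K} in
theorem mixedEmbedding_norm_eq_norm_sq (x : mixedSpace K) :
    mixedEmbedding.norm x = ‖x‖ ^ 2 := by
  obtain ⟨v, hv⟩ := Fintype.card_eq_one_iff.1 (card_infinitePlace_eq_one K)
  have huniv : (Finset.univ : Finset (InfinitePlace K)) = {v} :=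
    Finset.eq_singleton_iff_unique_mem.2 ⟨Finset.mem_univ v, fun w _ ↦ hv w⟩
  simp only [mixedEmbedding.norm_apply, mixedEmbedding.norm_eq_sup'_normAtPlace, huniv,
    Finset.prod_singleton, Finset.sup'_singleton, IsTotallyComplex.mult_eq]

open scoped Classical in
variable {K} in
theorem abs_norm_eq_norm_mixedEmbedding_sq (x : K) :
    ((|Algebra.norm ℚ x| : ℚ) : ℝ) = ‖mixedEmbedding K x‖ ^ 2 := by
  rw [← mixedEmbedding.norm_eq_norm, mixedEmbedding_norm_eq_norm_sq]

open scoped Classical in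
theorem volume_ball_mixedSpace :
    volume (Metric.ball (0 : mixedSpace K) 1) = NNReal.pi := by
  have hball : Metric.ball (0 : mixedSpace K) 1 =
      mixedEmbedding.convexBodyLT K 1 := by
    rw [Prod.zero_eq_mk, ← ball_prod_same, ball_pi _ one_pos, ball_pi _ one_pos]
    rfl
  rw [hball, mixedEmbedding.convexBodyLT_volume]
  simp [mixedEmbedding.convexBodyLTFactor, IsTotallyComplex.nrRealPlaces_eq_zero,
    nrComplexPlaces_eq_one]

open scoped Classical in
theorem setOf_norm_toMixed_le_one :
    {v | v ∈ Set.univ ∧ mixedEmbedding.norm (toMixed K v) ≤ 1} =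
      toMixed K ⁻¹' Metric.closedBall 0 1 := by
  ext x
  simp [mixedEmbedding_norm_eq_norm_sq]

open scoped Classical in
theorem covolume_euclideanIdealLattice (J : (Ideal (𝓞 K))⁰) :
    ZLattice.covolume (euclideanIdealLattice K J) =
      absNorm (J : Ideal (𝓞 K)) * 2⁻¹ * √|discr K| := by
  rw [euclideanIdealLattice, ZLattice.covolume_comap _ _ _ (volumePreserving_toMixed K),
    covolume_idealLattice, nrComplexPlaces_eq_one, pow_one, FractionalIdeal.coe_mk0,
    FractionalIdeal.coeIdeal_absNorm, Rat.cast_natCast]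

open scoped Classical in
theorem volume_real_preimage_toMixed_closedBall :
    volume.real (toMixed K ⁻¹' Metric.closedBall 0 1) = Real.pi := by
  rw [measureReal_def, (volumePreserving_toMixed K).measure_preimage
    measurableSet_closedBall.nullMeasurableSet, Measure.addHaar_closedBall_eq_addHaar_ball,
    volume_ball_mixedSpace, ENNReal.coe_toReal, NNReal.coe_real_pi]

open scoped Classical in
theorem tendsto_normCount_ideal_div (J : (Ideal (𝓞 K))⁰) :
    Tendsto (fun Y ↦ normCount K (J : Ideal (𝓞 K)) Y / Y) atTop
      (𝓝 (2 * Real.pi / (√|discr K| * absNorm (J : Ideal (𝓞 K))))) := by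
  have hlim := ZLattice.covolume.tendsto_card_le_div' (euclideanIdealLattice K J) (X := Set.univ)
    (F := fun v ↦ mixedEmbedding.norm (toMixed K v)) (fun _ _ _ _ ↦ Set.mem_univ _)
    (fun v r hr ↦ by rw [map_smul, mixedEmbedding.norm_smul, euclidean.finrank, abs_of_nonneg hr])
  rw [setOf_norm_toMixed_le_one, volume_real_preimage_toMixed_closedBall,
    covolume_euclideanIdealLattice] at hlim
  convert hlim ((toMixed K).antilipschitz.isBounded_preimage Metric.isBounded_closedBall)
    ((toMixed K).continuous.measurable measurableSet_closedBall)
    (volume_frontier_preimage_toMixed_closedBall K) using 2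
  · rw [normCount_ideal_eq_card]
  · have hJ : (absNorm (J : Ideal (𝓞 K)) : ℝ) ≠ 0 :=
      Nat.cast_ne_zero.2 (absNorm_ne_zero_of_nonZeroDivisors J)
    field_simp

end ImaginaryQuadratic

/-! ### Densities of sets of integers -/

section NormDensity

open Ideal

variable {K : Type*} [Field K]

theorem exists_sq_eq_of_isSquare_coe {x : 𝓞 K} (hx : IsSquare (x : K)) : ∃ y : 𝓞 K, y ^ 2 = x := by
  obtain ⟨k, hk⟩ := hx
  have hintegral : IsIntegral ℤ k := by
    refine IsIntegral.of_pow two_pos ?_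
    rw [pow_two, ← hk]
    exact x.isIntegral_coe
  exact ⟨⟨k, hintegral⟩, RingOfIntegers.ext ((pow_two k).trans hk.symm)⟩

variable [NumberField K]

/-- `S ⊆ 𝓞 K` has density `δ` if it contains `δY + o(Y)` elements of norm at most `Y`. -/
def HasNormDensity (S : Set (𝓞 K)) (δ : ℝ) : Prop :=
  Tendsto (fun Y ↦ normCount K S Y / Y) atTop (𝓝 δ)

theorem tendsto_sqrt_add_sq_div (β : ℝ) :
    Tendsto (fun Y : ℝ ↦ (√Y + β) ^ 2 / Y) atTop (𝓝 1) := by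
  have hinv : Tendsto (fun Y : ℝ ↦ (√Y)⁻¹) atTop (𝓝 0) :=
    tendsto_inv_atTop_zero.comp Real.tendsto_sqrt_atTop
  have hlim := ((hinv.const_mul β).const_add 1).pow 2
  rw [mul_zero, add_zero, one_pow] at hlim
  refine hlim.congr' ?_
  filter_upwards [eventually_gt_atTop 0] with Y hY
  nth_rewrite 3 [← Real.sq_sqrt hY.le]
  have := Real.sqrt_pos.2 hY
  field_simp

theorem tendsto_sqrt_add_sq_atTop (β : ℝ) : Tendsto (fun Y : ℝ ↦ (√Y + β) ^ 2) atTop atTop :=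
  (tendsto_pow_atTop two_ne_zero).comp
    (tendsto_atTop_add_const_right _ β Real.tendsto_sqrt_atTop)

theorem HasNormDensity.tendsto_sqrt_add_sq {S : Set (𝓞 K)} {δ : ℝ} (hS : HasNormDensity S δ)
    (β : ℝ) : Tendsto (fun Y ↦ normCount K S ((√Y + β) ^ 2) / Y) atTop (𝓝 δ) := by
  have hlim := (Tendsto.comp hS (tendsto_sqrt_add_sq_atTop β)).mul (tendsto_sqrt_add_sq_div β)
  rw [mul_one] at hlim
  refine hlim.congr' ?_
  filter_upwards [(tendsto_sqrt_add_sq_atTop β).eventually_gt_atTop 0] with Y hY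
  exact div_mul_div_cancel₀ hY.ne'

variable [Algebra.IsQuadraticExtension ℚ K] [IsTotallyComplex K]

theorem finite_setOf_abs_norm_le (Y : ℝ) :
    {x : 𝓞 K | ((|Algebra.norm ℚ (x : K)| : ℚ) : ℝ) ≤ Y}.Finite := by
  refine .of_finite_image ((Embeddings.finite_of_norm_le K ℂ √Y).subset ?_)
    RingOfIntegers.coe_injective.injOn
  rintro _ ⟨x, hx, rfl⟩
  refine ⟨x.isIntegral_coe, fun φ ↦ Real.le_sqrt_of_sq_le (le_trans ?_ hx)⟩
  rw [abs_norm_eq_norm_mixedEmbedding_sq]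
  gcongr
  rw [mixedEmbedding.norm_eq_sup'_normAtPlace, ← InfinitePlace.apply φ,
    ← mixedEmbedding.normAtPlace_apply]
  exact Finset.le_sup' (mixedEmbedding.normAtPlace · _) (Finset.mem_univ _)

instance finite_normCount_subtype (S : Set (𝓞 K)) (Y : ℝ) :
    Finite {x : 𝓞 K // x ∈ S ∧ ((|Algebra.norm ℚ (x : K)| : ℚ) : ℝ) ≤ Y} :=
  (finite_setOf_abs_norm_le Y).subset fun _ hx ↦ hx.2

theorem normCount_le_normCount {S T : Set (𝓞 K)} {Y Z : ℝ} {f : 𝓞 K → 𝓞 K} (hf : Set.InjOn f S)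
    (h : ∀ x ∈ S, ((|Algebra.norm ℚ (x : K)| : ℚ) : ℝ) ≤ Y →
      f x ∈ T ∧ ((|Algebra.norm ℚ (f x : K)| : ℚ) : ℝ) ≤ Z) :
    normCount K S Y ≤ normCount K T Z :=
  Nat.card_le_card_of_injective (fun x ↦ ⟨f x, h x x.2.1 x.2.2⟩)
    fun x y hxy ↦ Subtype.ext (hf x.2.1 y.2.1 (congrArg Subtype.val hxy))

theorem normCount_le_of_subset {S T : Set (𝓞 K)} (hST : S ⊆ T) (Y : ℝ) :
    normCount K S Y ≤ normCount K T Y :=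
  normCount_le_normCount (Set.injOn_id S) fun _ hx hxY ↦ ⟨hST hx, hxY⟩

open scoped Classical in
theorem normCount_preimage_sub_le (S : Set (𝓞 K)) (a : 𝓞 K) (Y : ℝ) :
    normCount K ((· - a) ⁻¹' S) Y ≤ normCount K S ((√Y + ‖mixedEmbedding K (a : K)‖) ^ 2) := by
  refine normCount_le_normCount (sub_left_injective.injOn) fun x hx hxY ↦ ⟨hx, ?_⟩
  rw [abs_norm_eq_norm_mixedEmbedding_sq] at hxY ⊢
  gcongr
  calc ‖mixedEmbedding K ((x - a : 𝓞 K) : K)‖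
      = ‖mixedEmbedding K (x : K) - mixedEmbedding K (a : K)‖ := by simp
    _ ≤ ‖mixedEmbedding K (x : K)‖ + ‖mixedEmbedding K (a : K)‖ := norm_sub_le _ _
    _ ≤ √Y + ‖mixedEmbedding K (a : K)‖ := by gcongr; exact Real.le_sqrt_of_sq_le hxY

open scoped Classical in
theorem normCount_le_preimage_sub (S : Set (𝓞 K)) (a : 𝓞 K) (Y : ℝ) :
    normCount K S Y ≤
      normCount K ((· - a) ⁻¹' S) ((√Y + ‖mixedEmbedding K (a : K)‖) ^ 2) := by
  simpa [Set.preimage_preimage] using normCount_preimage_sub_le ((· - a) ⁻¹' S) (-a) Y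

open scoped Classical in
theorem HasNormDensity.preimage_sub {S : Set (𝓞 K)} {δ : ℝ} (hS : HasNormDensity S δ)
    (a : 𝓞 K) : HasNormDensity ((· - a) ⁻¹' S) δ := by
  set α := ‖mixedEmbedding K (a : K)‖
  refine tendsto_of_tendsto_of_tendsto_of_le_of_le' (hS.tendsto_sqrt_add_sq (-α))
    (hS.tendsto_sqrt_add_sq α) ?_ ?_
  · filter_upwards [Real.tendsto_sqrt_atTop.eventually_ge_atTop α, eventually_gt_atTop 0]
      with Y hαY hY
    have hle := normCount_le_preimage_sub S a ((√Y + -α) ^ 2)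
    rw [Real.sqrt_sq (by linarith), neg_add_cancel_right, Real.sq_sqrt hY.le] at hle
    gcongr
  · filter_upwards [eventually_gt_atTop 0] with Y hY
    gcongr
    exact normCount_preimage_sub_le S a Y

theorem normCount_iUnion {ι : Type*} [Fintype ι] {S : ι → Set (𝓞 K)}
    (hS : Pairwise (Function.onFun Disjoint S)) (Y : ℝ) :
    normCount K (⋃ i, S i) Y = ∑ i, normCount K (S i) Y := by
  let B : Set (𝓞 K) := {x | ((|Algebra.norm ℚ (x : K)| : ℚ) : ℝ) ≤ Y}
  have hdisj : Pairwise (Function.onFun Disjoint fun i ↦ S i ∩ B) := fun i j hij ↦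
    (hS hij).mono Set.inter_subset_left Set.inter_subset_left
  simp only [normCount]
  rw [← Nat.card_sigma]
  refine Nat.card_congr ((Equiv.setCongr (Set.iUnion_inter B S)).trans
    (Set.unionEqSigmaOfDisjoint hdisj))

theorem HasNormDensity.iUnion {ι : Type*} [Fintype ι] {S : ι → Set (𝓞 K)} {δ : ι → ℝ}
    (hS : ∀ i, HasNormDensity (S i) (δ i)) (hdisj : Pairwise (Function.onFun Disjoint S)) :
    HasNormDensity (⋃ i, S i) (∑ i, δ i) := by
  refine (tendsto_finsetSum _ fun i _ ↦ hS i).congr fun Y ↦ ?_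
  rw [normCount_iUnion hdisj, Nat.cast_sum, Finset.sum_div]

theorem normCount_le_sdiff_add (S T : Set (𝓞 K)) (Y : ℝ) :
    normCount K S Y ≤ normCount K (S \ T) Y + normCount K T Y := by
  simp only [normCount]
  refine (Set.ncard_le_ncard (fun x hx ↦ ?_) ?_).trans (Set.ncard_union_le _ _)
  · by_cases hxT : x ∈ T
    · exact .inr ⟨hxT, hx.2⟩
    · exact .inl ⟨⟨hx.1, hxT⟩, hx.2⟩
  · refine (finite_setOf_abs_norm_le Y).subset ?_
    rintro x (hx | hx) <;> exact hx.2

theorem HasNormDensity.sdiff {S T : Set (𝓞 K)} {δ : ℝ} (hS : HasNormDensity S δ)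
    (hT : HasNormDensity T 0) : HasNormDensity (S \ T) δ := by
  have hlower := Tendsto.sub hS hT
  rw [sub_zero] at hlower
  refine tendsto_of_tendsto_of_tendsto_of_le_of_le' hlower hS ?_ ?_
  · filter_upwards [eventually_gt_atTop 0] with Y hY
    have hle : (normCount K S Y : ℝ) ≤ normCount K (S \ T) Y + normCount K T Y :=
      mod_cast normCount_le_sdiff_add S T Y
    rw [← sub_div]
    gcongr
    linarith
  · filter_upwards [eventually_gt_atTop 0] with Y hY
    gcongr
    exact normCount_le_of_subset Set.sdiff_subset Y

theorem hasNormDensity_ideal (J : (Ideal (𝓞 K))⁰) :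
    HasNormDensity ((J : Ideal (𝓞 K)) : Set (𝓞 K))
      (2 * Real.pi / (√|discr K| * absNorm (J : Ideal (𝓞 K)))) :=
  tendsto_normCount_ideal_div K J

theorem normCount_setOf_isSquare_le (Y : ℝ) :
    normCount K {x | IsSquare (x : K)} Y ≤ normCount K Set.univ √Y := by
  choose! r hr using fun x : 𝓞 K ↦ exists_sq_eq_of_isSquare_coe (x := x)
  refine normCount_le_normCount (f := r) (fun x hx y hy hxy ↦ by rw [← hr x hx, hxy, hr y hy])
    fun x hx hxY ↦ ⟨trivial, Real.le_sqrt_of_sq_le ?_⟩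
  refine le_trans (le_of_eq ?_) hxY
  nth_rewrite 2 [← hr x hx]
  simp

theorem hasNormDensity_setOf_isSquare : HasNormDensity {x : 𝓞 K | IsSquare (x : K)} 0 := by
  have hinv : Tendsto (fun Y : ℝ ↦ (√Y)⁻¹) atTop (𝓝 0) :=
    tendsto_inv_atTop_zero.comp Real.tendsto_sqrt_atTop
  have huniv := hasNormDensity_ideal (K := K) 1
  rw [OneMemClass.coe_one, one_eq_top, Submodule.top_coe] at huniv
  have hlim := (Tendsto.comp huniv Real.tendsto_sqrt_atTop).mul hinv
  rw [mul_zero] at hlim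
  refine squeeze_zero' ?_ ?_ hlim
  · filter_upwards [eventually_gt_atTop 0] with Y hY
    positivity
  · filter_upwards [eventually_gt_atTop 0] with Y hY
    rw [Function.comp_apply, ← div_eq_mul_inv, div_div, Real.mul_self_sqrt hY.le]
    gcongr
    exact normCount_setOf_isSquare_le Y

end NormDensity

/-! ### Squares modulo four -/

section SquaresModFour

open Ideal

theorem mem_of_mul_self_mem_mul_sup {R : Type*} [CommRing R] [IsDedekindDomain R]
    {P : Ideal R} {u : R} (hu : u * u ∈ P * (P ⊔ span {u})) : u ∈ P := by
  have hle : (P ⊔ span {u}) * (P ⊔ span {u}) ≤ P * (P ⊔ span {u}) := by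
    rw [Ideal.sup_mul, Ideal.mul_sup (span {u})]
    refine sup_le le_rfl (sup_le ?_ ?_)
    · rw [mul_comm]
      exact mul_mono_right le_sup_right
    · rwa [span_singleton_mul_span_singleton, span_singleton_le_iff_mem]
  have hsup : P ⊔ span {u} ≤ P := by
    rcases eq_or_ne (P ⊔ span {u}) ⊥ with hbot | hbot
    · exact hbot.le.trans bot_le
    · exact dvd_iff_le.1 ((mul_dvd_mul_iff_right hbot).1 (dvd_iff_le.2 hle))
  exact hsup (mem_sup_right (mem_span_singleton_self u))

theorem sub_mem_two_mul_of_sq_sub_sq_mem {R : Type*} [CommRing R] [IsDedekindDomain R]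
    {q : Ideal R} {t s : R} (hs : s ∈ q) (h : t ^ 2 - s ^ 2 ∈ span {4} * q ^ 2) :
    t - s ∈ span {2} * q := by
  have hfour : span {(4 : R)} * q ^ 2 = span {2} * q * (span {2} * q) := by
    rw [mul_mul_mul_comm, span_singleton_mul_span_singleton, pow_two]
    norm_num
  refine mem_of_mul_self_mem_mul_sup ?_
  rw [show (t - s) * (t - s) = (t ^ 2 - s ^ 2) - 2 * s * (t - s) by ring]
  refine sub_mem ?_ (mul_mem_mul (mul_mem_mul (mem_span_singleton_self 2) hs)
    (mem_sup_right (mem_span_singleton_self _)))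
  exact mul_mono_right le_sup_left (hfour ▸ h)

theorem sq_sub_sq_mem_of_sub_mem_two_mul {R : Type*} [CommRing R] {q : Ideal R} {t s : R}
    (hs : s ∈ q) (h : t - s ∈ span {2} * q) : t ^ 2 - s ^ 2 ∈ span {4} * q ^ 2 := by
  obtain ⟨c, hc, hcts⟩ := mem_span_singleton_mul.1 h
  refine mem_span_singleton_mul.2 ⟨c * s + c * c, ?_, ?_⟩
  · rw [pow_two]
    exact add_mem (mul_mem_mul hc hs) (mul_mem_mul hc hc)
  · linear_combination (t + s) * hcts + (-2 * c) * (sub_eq_iff_eq_add.1 hcts.symm)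

/-- The additive group `q / 2q`, whose elements index the classes of squares `t² + 4q²`. -/
abbrev ModTwo {R : Type*} [CommRing R] (q : Ideal R) : Type _ :=
  q.toAddSubgroup ⧸ (span {2} * q).toAddSubgroup.addSubgroupOf q.toAddSubgroup

theorem modTwo_mk_eq_mk_iff {R : Type*} [CommRing R] {q : Ideal R} {t s : q.toAddSubgroup} :
    (QuotientAddGroup.mk t : ModTwo q) = QuotientAddGroup.mk s ↔
      (s : R) - t ∈ span {2} * q := by
  rw [QuotientAddGroup.eq, AddSubgroup.mem_addSubgroupOf, AddSubgroup.coe_add,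
    AddSubgroup.coe_neg, neg_add_eq_sub]
  rfl

theorem setOf_isSquareModFour_eq_iUnion {R : Type*} [CommRing R] (q : Ideal R) :
    {D | IsSquareModFour q D} =
      ⋃ i : ModTwo q, (· - (i.out : R) ^ 2) ⁻¹' (span {4} * q ^ 2 : Ideal R) := by
  ext D
  refine ⟨fun ⟨t, ht, hD⟩ ↦ Set.mem_iUnion.2 ⟨QuotientAddGroup.mk ⟨t, ht⟩, ?_⟩, fun hD ↦ ?_⟩
  · have ht' := modTwo_mk_eq_mk_iff.1
      (QuotientAddGroup.out_eq' (QuotientAddGroup.mk ⟨t, ht⟩ : ModTwo q))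
    simpa using add_mem hD (sq_sub_sq_mem_of_sub_mem_two_mul (SetLike.coe_mem _) ht')
  · obtain ⟨i, hi⟩ := Set.mem_iUnion.1 hD
    exact ⟨i.out, i.out.2, hi⟩

theorem pairwise_disjoint_preimage_sub_sq {R : Type*} [CommRing R] [IsDedekindDomain R]
    (q : Ideal R) : Pairwise (Function.onFun Disjoint fun i : ModTwo q ↦
      (· - (i.out : R) ^ 2) ⁻¹' ((span {4} * q ^ 2 : Ideal R) : Set R)) := by
  intro i j hij
  refine Set.disjoint_left.2 fun D hi hj ↦ hij ?_
  have hsq : (j.out : R) ^ 2 - (i.out : R) ^ 2 ∈ span {4} * q ^ 2 := by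
    have hi : D - (i.out : R) ^ 2 ∈ span {4} * q ^ 2 := hi
    simpa using sub_mem hi hj
  rw [← QuotientAddGroup.out_eq' i, ← QuotientAddGroup.out_eq' j]
  exact modTwo_mk_eq_mk_iff.2 (sub_mem_two_mul_of_sq_sub_sq_mem i.out.2 hsq)

variable {K : Type*} [Field K] [NumberField K]

theorem card_modTwo {q : Ideal (𝓞 K)} (hq : q ≠ ⊥) :
    Nat.card (ModTwo q) = 2 ^ Module.finrank ℚ K := by
  have hindex := AddSubgroup.relIndex_mul_index (H := (span {2} * q).toAddSubgroup)
    (K := q.toAddSubgroup) mul_le_right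
  change Nat.card (ModTwo q) * absNorm q = absNorm (span {2} * q) at hindex
  rw [map_mul, ← Nat.cast_two (R := 𝓞 K), absNorm_span_natCast,
    RingOfIntegers.rank] at hindex
  exact Nat.eq_of_mul_eq_mul_right (Nat.pos_of_ne_zero (absNorm_eq_zero_iff.not.2 hq)) hindex

variable [Algebra.IsQuadraticExtension ℚ K] [IsTotallyComplex K]

theorem hasNormDensity_setOf_isSquareModFour {q : Ideal (𝓞 K)} (hq : q ≠ ⊥) :
    HasNormDensity {D | IsSquareModFour q D}
      (Real.pi / (2 * √|discr K| * (absNorm q : ℝ) ^ 2)) := by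
  have hrank := Algebra.IsQuadraticExtension.finrank_eq_two ℚ K
  have hcard : Nat.card (ModTwo q) = 4 := by rw [card_modTwo hq, hrank]; rfl
  have : Finite (ModTwo q) := Nat.finite_of_card_ne_zero (by rw [hcard]; norm_num)
  have := Fintype.ofFinite (ModTwo q)
  have hfour : absNorm (span {(4 : 𝓞 K)}) = 16 := by
    simpa [RingOfIntegers.rank, hrank] using absNorm_span_natCast (S := 𝓞 K) 4
  let J : (Ideal (𝓞 K))⁰ := ⟨span {4} * q ^ 2, mem_nonZeroDivisors_of_ne_zero
    (mul_ne_zero (by simp) (pow_ne_zero 2 hq))⟩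
  have hunion := HasNormDensity.iUnion
    (fun i : ModTwo q ↦ (hasNormDensity_ideal J).preimage_sub ((i.out : 𝓞 K) ^ 2))
    (pairwise_disjoint_preimage_sub_sq q)
  rw [← setOf_isSquareModFour_eq_iUnion] at hunion
  convert hunion using 1
  rw [Finset.sum_const, Finset.card_univ, ← Nat.card_eq_fintype_card, hcard]
  simp only [J, map_mul, map_pow, hfour, nsmul_eq_mul]
  push_cast
  ring

end SquaresModFour

/-! ### Counting quadratic extensions of imaginary quadratic fields -/

section Units

variable {K : Type*} [Field K] [NumberField K]

theorem card_ker_sq_units :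
    Nat.card (powMonoidHom 2 : (𝓞 K)ˣ →* (𝓞 K)ˣ).ker = 2 :=
  (IsPrimitiveRoot.neg_one 0 two_ne_zero.symm).card_rootsOfUnity

theorem two_mul_card_unitSquares : 2 * Nat.card (UnitSquares K) = Nat.card (𝓞 K)ˣ := by
  rw [← Subgroup.card_mul_index (powMonoidHom 2 : (𝓞 K)ˣ →* (𝓞 K)ˣ).ker, card_ker_sq_units,
    Subgroup.index_ker]

variable [Algebra.IsQuadraticExtension ℚ K] [IsTotallyComplex K]

instance finite_units : Finite (𝓞 K)ˣ := by
  have hfin : Finite {x : 𝓞 K | ((|Algebra.norm ℚ (x : K)| : ℚ) : ℝ) ≤ 1} :=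
    finite_setOf_abs_norm_le 1
  refine Finite.of_injective
    (fun u ↦ (⟨u, ?_⟩ : {x : 𝓞 K | ((|Algebra.norm ℚ (x : K)| : ℚ) : ℝ) ≤ 1})) fun u v huv ↦ ?_
  · exact_mod_cast (isUnit_iff_norm.1 u.isUnit).le
  · exact Units.ext (congrArg Subtype.val huv)

theorem torsion_eq_top : Units.torsion K = ⊤ :=
  top_le_iff.1 fun u _ ↦ isOfFinOrder_of_finite u

theorem card_units_eq_torsionOrder : Nat.card (𝓞 K)ˣ = Units.torsionOrder K := by
  rw [Units.torsionOrder, torsion_eq_top, Subgroup.card_top]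

end Units

section Counting

open Ideal

theorem natCast_card_eq_tsum_card_fiber {α β : Type*} [Finite α] (f : α → β) :
    (Nat.card α : ℝ) = ∑' b, (Nat.card {a // f a = b} : ℝ) := by
  classical
  have := Fintype.ofFinite α
  rw [tsum_eq_sum (s := Finset.univ.image f)]
  · rw [Nat.card_eq_fintype_card, ← Finset.card_univ, Finset.card_eq_sum_card_image f Finset.univ,
      Nat.cast_sum]
    exact Finset.sum_congr rfl fun b _ ↦ by rw [Nat.card_eq_fintype_card, Fintype.card_subtype]
  · intro b hb
    have : IsEmpty {a // f a = b} :=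
      ⟨fun a ↦ hb (Finset.mem_image.2 ⟨a.1, Finset.mem_univ _, a.2⟩)⟩
    simp

variable (K : Type*) [Field K] [NumberField K]

/-- The number of quadratic extensions of `K` whose absolute discriminant is at most the real
number `Y`. -/
noncomputable def discrCount (Y : ℝ) : ℕ :=
  Nat.card {L : QuadraticExt K // ((discr L.1).natAbs : ℝ) ≤ Y}

/-- The number of pairs `(L, f)` of a quadratic extension and a nonzero ideal of `K` with
`|disc L| · N(f)² ≤ Y`. -/
noncomputable def weightedDiscrCount (Y : ℝ) : ℕ :=
  Nat.card {x : QuadraticExt K × (Ideal (𝓞 K))⁰ //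
    ((discr x.1.1).natAbs : ℝ) * idealNormSq K x.2 ≤ Y}

/-- The second components of the parameters in `ParamSet K` whose first component is `c`. -/
def paramFiber (c : ClassGroup (𝓞 K)) : Set (𝓞 K) :=
  {D | IsSquareModFour (classRep c : Ideal (𝓞 K)) D} \ {D | IsSquare (D : K)}

theorem quadCount_eq_discrCount (n : ℕ) : quadCount K n = discrCount K n := by
  refine Nat.card_congr ((Equiv.subtypeEquivRight fun L ↦ ?_).trans
    (Equiv.subtypeSubtypeEquivSubtypeExists _ _).symm)
  refine ⟨fun ⟨hL, _, hn⟩ ↦ ⟨hL, ?_⟩, fun ⟨hL, hn⟩ ↦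
    have : Algebra.IsQuadraticExtension K L := ⟨hL⟩
    ⟨hL, .of_module_finite K L, ?_⟩⟩
  · rw [Int.abs_eq_natAbs] at hn
    exact_mod_cast hn
  · rw [Int.abs_eq_natAbs]
    exact_mod_cast hn

theorem discrCount_eq_zero {Y : ℝ} (hY : Y < 1) : discrCount K Y = 0 := by
  have : IsEmpty {L : QuadraticExt K // ((discr L.1).natAbs : ℝ) ≤ Y} := by
    refine ⟨fun L ↦ (L.2.trans_lt hY).not_ge ?_⟩
    exact_mod_cast Int.natAbs_pos.2 (discr_ne_zero _)
  exact Nat.card_of_isEmpty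

theorem card_fiber_weightedDiscr (f : (Ideal (𝓞 K))⁰) (Y : ℝ) :
    Nat.card {x : {x : QuadraticExt K × (Ideal (𝓞 K))⁰ //
      ((discr x.1.1).natAbs : ℝ) * idealNormSq K x.2 ≤ Y} // x.1.2 = f} =
      discrCount K (Y / idealNormSq K f) := by
  have hf : 0 < idealNormSq K f := one_pos.trans_le (one_le_idealNormSq K f)
  exact Nat.card_congr
    { toFun x := ⟨x.1.1.1, by obtain ⟨⟨x, hx⟩, rfl⟩ := x; exact (le_div_iff₀ hf).2 hx⟩
      invFun L := ⟨⟨(L.1, f), (le_div_iff₀ hf).1 L.2⟩, rfl⟩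
      left_inv := by rintro ⟨⟨⟨L, _⟩, _⟩, rfl⟩; rfl
      right_inv _ := rfl }

variable {K}

theorem abs_norm_paramEquiv_le_iff
    (z : (QuadraticExt K × (Ideal (𝓞 K))⁰) × UnitSquares K) (Y : ℝ) :
    ((discr z.1.1.1).natAbs : ℝ) * idealNormSq K z.1.2 ≤ Y ↔
      ((|Algebra.norm ℚ ((paramEquiv K z).1.2 : K)| : ℚ) : ℝ) ≤
        Y * (idealNormSq K (classRep (paramEquiv K z).1.1) / |(discr K : ℝ)| ^ 2) := by
  have hd : 0 < |(discr K : ℝ)| := abs_pos.2 (Int.cast_ne_zero.2 (discr_ne_zero K))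
  have hc := one_pos.trans_le (one_le_idealNormSq K (classRep (paramEquiv K z).1.1))
  have heq : |(discr K : ℝ)| ^ 2 * ((|Algebra.norm ℚ ((paramEquiv K z).1.2 : K)| : ℚ) : ℝ) =
      (discr z.1.1.1).natAbs * idealNormSq K z.1.2 *
        idealNormSq K (classRep (paramEquiv K z).1.1) := by
    have := congrArg (Rat.cast (K := ℝ)) (sq_discr_mul_abs_norm_paramEquiv z)
    simpa [idealNormSq_apply, Nat.cast_natAbs] using this
  rw [mul_div_assoc', le_div_iff₀ (by positivity), mul_comm _ (|(discr K : ℝ)| ^ 2), heq,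
    mul_le_mul_iff_left₀ hc]

variable (K) in
/-- `paramEquiv K` restricted to the pairs `(L, f)` with `|disc L| · N(f)² ≤ Y`. -/
noncomputable def paramEquivOfLE (Y : ℝ) :
    {x : QuadraticExt K × (Ideal (𝓞 K))⁰ //
      ((discr x.1.1).natAbs : ℝ) * idealNormSq K x.2 ≤ Y} × UnitSquares K ≃
    Σ c : ClassGroup (𝓞 K), {D : 𝓞 K // D ∈ paramFiber K c ∧
      ((|Algebra.norm ℚ (D : K)| : ℚ) : ℝ) ≤
        Y * (idealNormSq K (classRep c) / |(discr K : ℝ)| ^ 2)} :=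
  Equiv.prodSubtypeFstEquivSubtypeProd.symm.trans <|
    ((paramEquiv K).subtypeEquiv fun z ↦ abs_norm_paramEquiv_le_iff z Y).trans <|
    (Equiv.subtypeSubtypeEquivSubtypeInter (· ∈ ParamSet K) _).trans <|
    Equiv.subtypeProdEquivSigmaSubtype fun c D ↦ D ∈ paramFiber K c ∧
      ((|Algebra.norm ℚ (D : K)| : ℚ) : ℝ) ≤
        Y * (idealNormSq K (classRep c) / |(discr K : ℝ)| ^ 2)

theorem HasNormDensity.tendsto_mul_const {S : Set (𝓞 K)} {δ a : ℝ} (hS : HasNormDensity S δ)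
    (ha : 0 < a) : Tendsto (fun Y ↦ normCount K S (Y * a) / Y) atTop (𝓝 (δ * a)) := by
  refine ((Tendsto.comp hS (tendsto_id.atTop_mul_const ha)).mul_const a).congr fun Y ↦ ?_
  rw [Function.comp_apply, id, div_mul_eq_mul_div, mul_div_mul_right _ _ ha.ne']

variable [Algebra.IsQuadraticExtension ℚ K] [IsTotallyComplex K]

theorem finite_weightedDiscr_le (Y : ℝ) :
    Finite {x : QuadraticExt K × (Ideal (𝓞 K))⁰ //
      ((discr x.1.1).natAbs : ℝ) * idealNormSq K x.2 ≤ Y} :=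
  Finite.of_injective _ ((paramEquivOfLE K Y).injective.comp (Prod.mk_left_injective 1))

theorem weightedDiscrCount_mono : Monotone (weightedDiscrCount K) := fun Y Z hYZ ↦ by
  have := finite_weightedDiscr_le (K := K) Z
  exact Nat.card_le_card_of_injective _
    (Subtype.map_injective (fun _ hx ↦ hx.trans hYZ) Function.injective_id)

theorem weightedDiscrCount_eq_tsum (Y : ℝ) :
    (weightedDiscrCount K Y : ℝ) = ∑' f, (discrCount K (Y / idealNormSq K f) : ℝ) := by
  have := finite_weightedDiscr_le (K := K) Y
  rw [weightedDiscrCount, natCast_card_eq_tsum_card_fiber fun x ↦ x.1.2]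
  simp only [card_fiber_weightedDiscr]

theorem weightedDiscrCount_mul_torsionOrder (Y : ℝ) :
    weightedDiscrCount K Y * Units.torsionOrder K = 2 * ∑ c : ClassGroup (𝓞 K),
      normCount K (paramFiber K c) (Y * (idealNormSq K (classRep c) / |(discr K : ℝ)| ^ 2)) := by
  rw [← card_units_eq_torsionOrder, ← two_mul_card_unitSquares, weightedDiscrCount, mul_left_comm,
    ← Nat.card_prod, Nat.card_congr (paramEquivOfLE K Y), Nat.card_sigma]
  rfl

theorem hasNormDensity_paramFiber (c : ClassGroup (𝓞 K)) :
    HasNormDensity (paramFiber K c)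
      (Real.pi / (2 * √|(discr K : ℝ)| * idealNormSq K (classRep c))) :=
  (hasNormDensity_setOf_isSquareModFour (classRep_ne_bot c)).sdiff hasNormDensity_setOf_isSquare

theorem tendsto_weightedDiscrCount_div :
    Tendsto (fun Y ↦ weightedDiscrCount K Y / Y) atTop
      (𝓝 (Real.pi * classNumber K / (Units.torsionOrder K * |(discr K : ℝ)| ^ (5 / 2 : ℝ)))) := by
  have hw : (Units.torsionOrder K : ℝ) ≠ 0 := Nat.cast_ne_zero.2 (Units.torsionOrder_ne_zero K)
  have hd : 0 < |(discr K : ℝ)| := abs_pos.2 (Int.cast_ne_zero.2 (discr_ne_zero K))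
  have hc (c : ClassGroup (𝓞 K)) := one_pos.trans_le (one_le_idealNormSq K (classRep c))
  have hpow : |(discr K : ℝ)| ^ (5 / 2 : ℝ) = √|(discr K : ℝ)| * |(discr K : ℝ)| ^ 2 := by
    rw [Real.sqrt_eq_rpow, ← Real.rpow_ofNat, ← Real.rpow_add hd]
    norm_num
  have hclass (c : ClassGroup (𝓞 K)) : Tendsto (fun Y ↦ (normCount K (paramFiber K c)
      (Y * (idealNormSq K (classRep c) / |(discr K : ℝ)| ^ 2)) : ℝ) / Y) atTop
      (𝓝 (Real.pi / (2 * |(discr K : ℝ)| ^ (5 / 2 : ℝ)))) := by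
    convert (hasNormDensity_paramFiber c).tendsto_mul_const (div_pos (hc c) (pow_pos hd 2)) using 2
    have := (hc c).ne'
    rw [hpow]
    field_simp
  have hsum := (tendsto_finsetSum Finset.univ fun c _ ↦ hclass c).const_mul
    (2 / Units.torsionOrder K : ℝ)
  convert hsum using 2 with Y
  · have hY := congrArg (Nat.cast (R := ℝ)) (weightedDiscrCount_mul_torsionOrder (K := K) Y)
    push_cast at hY
    rw [eq_div_of_mul_eq hw hY, ← Finset.sum_div]
    ring
  · rw [Finset.sum_const, Finset.card_univ, classNumber, nsmul_eq_mul]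
    field_simp

variable (K) in
theorem quadratic_count_imaginary_general :
    Tendsto (fun n : ℕ ↦ (quadCount K n : ℝ) / n) atTop
      (𝓝 (Real.pi * classNumber K /
        (Units.torsionOrder K * |(discr K : ℝ)| ^ (5 / 2 : ℝ) * dedekindZetaTwo K))) := by
  have hlim := tendsto_div_of_eq_tsum (one_le_idealNormSq K) (summable_idealNormSq_inv K)
    (Q := fun Y ↦ discrCount K Y) (fun Y hY ↦ by rw [discrCount_eq_zero K hY, Nat.cast_zero])
    weightedDiscrCount_eq_tsum (Nat.mono_cast.comp weightedDiscrCount_mono)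
    tendsto_weightedDiscrCount_div
  rw [div_div, ← dedekindZetaTwo_eq_tsum] at hlim
  simp only [quadCount_eq_discrCount]
  exact hlim.comp tendsto_natCast_atTop_atTop

end Counting

/-! ### The fields `ℚ(√-p)` -/

section Discriminant

theorem exists_natAbs_discr_mul_sq_eq {K L : Type*} [Field K] [NumberField K] [Field L]
    [NumberField L] [Algebra K L] [Algebra.IsQuadraticExtension K L] {D : 𝓞 K}
    (hD : ¬IsSquare (D : K)) {a : L} (ha : a ^ 2 = algebraMap K L D) (h : IsSquareModFour ⊤ D) :
    ∃ n : ℕ, (discr L).natAbs * n ^ 2 = (discr K).natAbs ^ 2 * Ideal.absNorm (Ideal.span {D}) := by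
  obtain ⟨b, hb⟩ := exists_eq_radicand_mul_sq hD ha
  obtain ⟨c, hc, rfl⟩ := exists_mem_mul_of_isSquareModFour top_ne_bot hb h
  rw [Ideal.mul_top] at hc
  obtain ⟨n, hn⟩ := Ideal.absNorm_dvd_absNorm_of_le
    ((Ideal.span_singleton_le_iff_mem (conjDiffIdeal K L)).2 hc)
  refine ⟨n, Nat.cast_injective (R := ℚ) ?_⟩
  push_cast
  rw [natAbs_discr_eq_of_isQuadraticExtension K L, natCast_absNorm_span_singleton, hb, map_mul,
    map_pow, abs_mul, abs_pow, ← natCast_absNorm_span_singleton, hn]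
  push_cast
  ring

theorem isSquareModFour_top_intCast {R : Type*} [CommRing R] {d t : ℤ} (hdt : 4 ∣ d - t ^ 2) :
    IsSquareModFour (⊤ : Ideal R) d := by
  refine ⟨t, trivial, ?_⟩
  rw [Ideal.top_pow, Ideal.mul_top, Ideal.mem_span_singleton]
  simpa using map_dvd (Int.castRingHom R) hdt

variable {K : Type*} [Field K] [NumberField K] [Algebra.IsQuadraticExtension ℚ K]

theorem exists_natAbs_discr_mul_sq_eq_natAbs {d t : ℤ} (hdt : 4 ∣ d - t ^ 2) (hd : ¬IsSquare d)
    {a : K} (ha : a ^ 2 = d) : ∃ n : ℕ, (discr K).natAbs * n ^ 2 = d.natAbs := by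
  obtain ⟨n, hn⟩ := exists_natAbs_discr_mul_sq_eq (K := ℚ) (L := K) (D := d) (a := a)
    (by simpa using hd) (by simpa using ha) (isSquareModFour_top_intCast hdt)
  have hnorm : Ideal.absNorm (Ideal.span {(d : 𝓞 ℚ)}) = d.natAbs := by
    rw [Ideal.absNorm_span_singleton, ← eq_intCast (algebraMap ℤ (𝓞 ℚ)), Algebra.norm_algebraMap,
      RingOfIntegers.rank, Module.finrank_self, pow_one]
  exact ⟨n, by simpa [hnorm] using hn⟩

theorem natAbs_discr_eq_natAbs_of_squarefree {d : ℤ} (hd : Squarefree d) (hd1 : d ≠ 1)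
    (hd4 : 4 ∣ d - 1) {r : K} (hr : r ^ 2 = d) : (discr K).natAbs = d.natAbs := by
  have hnsq : ¬IsSquare d := by
    rintro ⟨k, rfl⟩
    exact hd1 (Int.isUnit_mul_self (hd k dvd_rfl))
  obtain ⟨n, hn⟩ := exists_natAbs_discr_mul_sq_eq_natAbs (t := 1) (by simpa using hd4) hnsq hr
  have hn1 : n = 1 := Nat.isUnit_iff.1 <|
    Int.squarefree_natAbs.2 hd n ⟨(discr K).natAbs, by rw [← hn, mul_comm, pow_two]⟩
  rw [← hn, hn1, one_pow, mul_one]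

end Discriminant

section ImaginaryQuadratic

variable {K : Type*} [Field K]

theorem isTotallyComplex_of_sq_eq_intCast {d : ℤ} (hd : d < 0) {r : K} (hr : r ^ 2 = d) :
    IsTotallyComplex K where
  isComplex v := InfinitePlace.not_isReal_iff_isComplex.1 fun hv ↦ by
    have hsq := congrArg (InfinitePlace.embedding_of_isReal hv) hr
    rw [map_pow, map_intCast] at hsq
    exact (sq_nonneg (InfinitePlace.embedding_of_isReal hv r)).not_gt
      (hsq.trans_lt (Int.cast_lt_zero.2 hd))

variable [NumberField K] [Algebra.IsQuadraticExtension ℚ K]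

theorem intCast_trace_eq_add_quadConj (x : 𝓞 K) :
    (Algebra.trace ℤ (𝓞 K) x : K) = x + quadConj ℚ K x := by
  rw [← algebraMap_trace_eq_add_quadConj, ← Algebra.coe_trace_int, map_intCast]

variable [IsTotallyComplex K]

theorem embedding_quadConj (φ : K →+* ℂ) (x : K) :
    φ (quadConj ℚ K x) = starRingEnd ℂ (φ x) := by
  have : Subsingleton (InfinitePlace K) :=
    Fintype.card_le_one_iff_subsingleton.1 (card_infinitePlace_eq_one K).le
  have hne : φ ≠ φ.comp (quadConj ℚ K : K →+* K) := fun h ↦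
    quadConj_ne_one ℚ K (AlgEquiv.ext fun y ↦ φ.injective (RingHom.congr_fun h y).symm)
  have hconj := (InfinitePlace.mk_eq_iff.1 (Subsingleton.elim (InfinitePlace.mk φ)
    (InfinitePlace.mk (φ.comp (quadConj ℚ K : K →+* K))))).resolve_left hne
  exact (RingHom.congr_fun hconj x).symm

theorem norm_embedding_unit (φ : K →+* ℂ) (u : (𝓞 K)ˣ) : ‖φ u‖ = 1 :=
  (Units.mem_torsion K).1 (torsion_eq_top (K := K) ▸ Subgroup.mem_top u) (InfinitePlace.mk φ)

theorem mul_quadConj_unit (u : (𝓞 K)ˣ) : (u : K) * quadConj ℚ K u = 1 := by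
  have φ : K →+* ℂ := Classical.arbitrary _
  refine φ.injective ?_
  rw [map_mul, embedding_quadConj, Complex.mul_conj', norm_embedding_unit, map_one]
  norm_num

theorem sq_trace_unit_le_four (u : (𝓞 K)ˣ) : Algebra.trace ℤ (𝓞 K) (u : 𝓞 K) ^ 2 ≤ 4 := by
  have φ : K →+* ℂ := Classical.arbitrary _
  have htrace : |(Algebra.trace ℤ (𝓞 K) (u : 𝓞 K) : ℝ)| ≤ 2 := calc
    _ = ‖φ u + starRingEnd ℂ (φ u)‖ := by
      rw [← embedding_quadConj, ← map_add, ← intCast_trace_eq_add_quadConj, map_intCast,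
        Complex.norm_intCast]
    _ ≤ ‖φ u‖ + ‖starRingEnd ℂ (φ u)‖ := norm_add_le _ _
    _ = 2 := by rw [RCLike.norm_conj, norm_embedding_unit, one_add_one_eq_two]
  have hsq := sq_le_sq.2 (htrace.trans (le_abs_self 2))
  norm_num at hsq
  exact_mod_cast hsq

theorem unit_eq_one_or_eq_neg_one (hK : 4 < (discr K).natAbs) (u : (𝓞 K)ˣ) :
    u = 1 ∨ u = -1 := by
  set t := Algebra.trace ℤ (𝓞 K) (u : 𝓞 K)
  have hdiff : ((u : K) - quadConj ℚ K u) ^ 2 = ((t ^ 2 - 4 : ℤ) : K) := by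
    push_cast
    rw [intCast_trace_eq_add_quadConj]
    linear_combination (-4) * mul_quadConj_unit u
  by_cases ht : t ^ 2 = 4
  · rw [ht, sub_self, Int.cast_zero, sq_eq_zero_iff, sub_eq_zero] at hdiff
    have hsq : (u : K) ^ 2 = 1 := by rw [pow_two, ← mul_quadConj_unit u, ← hdiff]
    exact (sq_eq_one_iff.1 (RingOfIntegers.ext (by simpa using hsq))).imp Units.ext Units.ext
  · have hneg : t ^ 2 - 4 < 0 := sub_neg.2 ((sq_trace_unit_le_four u).lt_of_ne ht)
    obtain ⟨n, hn⟩ := exists_natAbs_discr_mul_sq_eq_natAbs (by simp : 4 ∣ t ^ 2 - 4 - t ^ 2)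
      (fun hsq ↦ hneg.not_ge hsq.nonneg) hdiff
    have hn0 : 0 < n ^ 2 := by
      refine Nat.pos_of_ne_zero fun h0 ↦ hneg.ne (Int.natAbs_eq_zero.1 ?_)
      rw [← hn, h0, mul_zero]
    have hle := Nat.le_mul_of_pos_right (discr K).natAbs hn0
    have := sq_nonneg t
    omega

theorem torsionOrder_eq_two (hK : 4 < (discr K).natAbs) : Units.torsionOrder K = 2 := by
  rw [← card_units_eq_torsionOrder, Nat.card_eq_two_iff]
  refine ⟨1, -1, ?_, Set.eq_univ_of_forall (unit_eq_one_or_eq_neg_one hK)⟩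
  exact fun h ↦ self_ne_neg.2 one_ne_zero (congrArg Units.val h)

end ImaginaryQuadratic

section PrimesOverTwo

variable {K : Type*} [Field K] [NumberField K] [Algebra.IsQuadraticExtension ℚ K]

theorem absNorm_eq_two_or_eq_four {P : Ideal (𝓞 K)} (hP : P.IsPrime) (h2 : (2 : 𝓞 K) ∈ P) :
    Ideal.absNorm P = 2 ∨ Ideal.absNorm P = 4 := by
  have hdvd : Ideal.absNorm P ∣ 2 ^ 2 := by
    have := Ideal.absNorm_dvd_absNorm_of_le ((Ideal.span_singleton_le_iff_mem P).2 h2)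
    rwa [← Nat.cast_ofNat, Ideal.absNorm_span_natCast, RingOfIntegers.rank,
      Algebra.IsQuadraticExtension.finrank_eq_two] at this
  have hne : Ideal.absNorm P ≠ 1 := fun h ↦ hP.ne_top (Ideal.absNorm_eq_one_iff.1 h)
  obtain ⟨k, hk, hPk⟩ := (Nat.dvd_prime_pow Nat.prime_two).1 hdvd
  interval_cases k <;> simp_all

theorem finprod_gFactor_div_eq_one :
    ∏ᶠ 𝔭 ∈ {𝔭 : Ideal (𝓞 K) | 𝔭.IsPrime ∧ (2 : 𝓞 K) ∈ 𝔭},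
      gFactor (Ideal.absNorm 𝔭) 1 / (1 + ((Ideal.absNorm 𝔭 : ℝ))⁻¹) = 1 := by
  refine finprod_mem_of_eqOn_one fun P ⟨hP, h2⟩ ↦ ?_
  rcases absNorm_eq_two_or_eq_four hP h2 with h | h <;>
    norm_num [h, gFactor, Real.rpow_neg]

end PrimesOverTwo

theorem quadratic_count_imaginary (p : ℕ) (hp : p.Prime) (hp3 : 3 < p) (hpmod : p % 4 = 3)
    (K : Type*) [Field K] [NumberField K]
    (hdeg : Module.finrank ℚ K = 2) (hsqrt : ∃ x : K, x ^ 2 = -(p : K)) :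
    Tendsto (fun n : ℕ => (quadCount K n : ℝ) / (n : ℝ)) atTop
      (nhds ((Real.pi * (NumberField.classNumber K : ℝ)) /
          (2 * (p : ℝ) ^ ((5 : ℝ) / 2) * dedekindZetaTwo K) *
        ∏ᶠ 𝔭 ∈ {𝔭 : Ideal (𝓞 K) | 𝔭.IsPrime ∧ (2 : 𝓞 K) ∈ 𝔭},
          gFactor (Ideal.absNorm 𝔭) 1 / (1 + ((Ideal.absNorm 𝔭 : ℝ))⁻¹))) := by
  obtain ⟨r, hr⟩ := hsqrt
  have hr' : r ^ 2 = ((-p : ℤ) : K) := by simpa using hr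
  have : Algebra.IsQuadraticExtension ℚ K := ⟨hdeg⟩
  have : IsTotallyComplex K := isTotallyComplex_of_sq_eq_intCast (by simpa using hp.pos) hr'
  have hdiscr : (discr K).natAbs = p := by
    simpa using natAbs_discr_eq_natAbs_of_squarefree
      (Int.squarefree_natAbs.1 (by simpa using hp.squarefree)) (by omega) (by omega) hr'
  have htorsion : Units.torsionOrder K = 2 := torsionOrder_eq_two (by omega)
  rw [finprod_gFactor_div_eq_one, mul_one, ← hdiscr, Nat.cast_natAbs, Int.cast_abs]
  simpa [htorsion] using quadratic_count_imaginary_general K
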